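/- arXiv:1306.0852 — 5 statements merged into one kernel-verified Lean document; each statement's English description precedes it below -/
import Mathlib

section
/- Let f : [0,∞) → ℝ be differentiable with f' Lebesgue integrable on [a,b], where 0 < a < b < ∞. Let m ∈ (0,1], q > 1, and 0 < p < q. If |f'|^q is (1,m)-GA-convex on [0, max{a^{1/m}, b}], then |(b²·f(b) − a²·f(a))/2 − ∫_a^b x·f(x) dx| ≤ ((ln b − ln a)^{1−1/q}/2) · (1/(3p))^{1/q} · [L(a^{3(q−p)/(q−1)}, b^{3(q−p)/(q−1)})]^{1−1/q} · { m·[L(a^{3p}, b^{3p}) − a^{3p}]·|f'(a^{1/m})|^q + [b^{3p} − L(a^{3p}, b^{3p})]·|f'(b)|^q }^{1/q}. -/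
open Real MeasureTheory Set

/-- The logarithmic mean `L(x,y) = (y - x)/(ln y - ln x)`. -/
noncomputable def L (x y : ℝ) : ℝ := (y - x) / (Real.log y - Real.log x)

/-- `G(α,ℓ) = ∫_0^1 t^α a^{ℓ(1-t)} b^{ℓ t} dt` (for parameters `a, b`). -/
noncomputable def G (a b α ℓ : ℝ) : ℝ :=
  ∫ t in (0:ℝ)..1, t ^ α * a ^ (ℓ * (1 - t)) * b ^ (ℓ * t)

/-- A function `h` is `(α,m)`-GA-convex on `[0,c]` if
`h(x^λ y^{m(1-λ)}) ≤ λ^α h(x) + m(1-λ^α) h(y)` for all `x, y ∈ [0,c]`, `λ ∈ [0,1]`. -/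
def GAConvexOn (α m c : ℝ) (h : ℝ → ℝ) : Prop :=
  ∀ x ∈ Icc (0:ℝ) c, ∀ y ∈ Icc (0:ℝ) c, ∀ l ∈ Icc (0:ℝ) 1,
    h (x ^ l * y ^ (m * (1 - l))) ≤ l ^ α * h x + m * (1 - l ^ α) * h y

/-- A function `h` is `(α,m)`-GA-concave on `[0,c]` if
`h(x^λ y^{m(1-λ)}) ≥ λ^α h(x) + m(1-λ^α) h(y)` for all `x, y ∈ [0,c]`, `λ ∈ [0,1]`. -/
def GAConcaveOn (α m c : ℝ) (h : ℝ → ℝ) : Prop :=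
  ∀ x ∈ Icc (0:ℝ) c, ∀ y ∈ Icc (0:ℝ) c, ∀ l ∈ Icc (0:ℝ) 1,
    l ^ α * h x + m * (1 - l ^ α) * h y ≤ h (x ^ l * y ^ (m * (1 - l)))

/-!
Integrating by parts, the left-hand side is half the absolute value of `∫ x in a..b, x ^ 2 * f' x`.
Writing `x = a ^ (1 - t) * b ^ t = (a ^ (1 / m)) ^ (m * (1 - t)) * b ^ t`, GA-convexity bounds
`|f' x| ^ q` by a function affine in `log x`. Splitting the weight as
`x ^ 2 = (x ^ (s - 1)) ^ (1 - 1 / q) * (x ^ (r - 1)) ^ (1 / q)` with `r = 3 * p` and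
`s = 3 * (q - p) / (q - 1)`, Hölder's inequality leaves two integrals that are explicit in terms of
logarithmic means.
-/

section Holder

theorem abs_integral_le_rpow_integral_mul_rpow_integral {X : Type*} [MeasurableSpace X]
    {μ : Measure X} {g u v : X → ℝ} {s t : ℝ} (hs : 0 ≤ s) (ht : 0 ≤ t) (hst : s + t = 1)
    (hu : Integrable u μ) (hv : Integrable v μ) (hu_nonneg : 0 ≤ᵐ[μ] u) (hv_nonneg : 0 ≤ᵐ[μ] v)
    (hg : ∀ᵐ x ∂μ, |g x| ≤ u x ^ s * v x ^ t) :
    |∫ x, g x ∂μ| ≤ (∫ x, u x ∂μ) ^ s * (∫ x, v x ∂μ) ^ t := by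
  have hg_enorm : ∀ᵐ x ∂μ, ‖g x‖ₑ ≤ ENNReal.ofReal (u x) ^ s * ENNReal.ofReal (v x) ^ t := by
    filter_upwards [hg, hu_nonneg, hv_nonneg] with x hgx hux hvx
    rw [ENNReal.ofReal_rpow_of_nonneg hux hs, ENNReal.ofReal_rpow_of_nonneg hvx ht,
      ← ENNReal.ofReal_mul (rpow_nonneg hux s), Real.enorm_eq_ofReal_abs]
    exact ENNReal.ofReal_le_ofReal hgx
  have hI_nonneg : 0 ≤ ∫ x, u x ∂μ := integral_nonneg_of_ae hu_nonneg
  have hJ_nonneg : 0 ≤ ∫ x, v x ∂μ := integral_nonneg_of_ae hv_nonneg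
  rw [← ENNReal.ofReal_le_ofReal_iff (by positivity), ← Real.enorm_eq_ofReal_abs]
  calc
    ‖∫ x, g x ∂μ‖ₑ ≤ ∫⁻ x, ‖g x‖ₑ ∂μ := enorm_integral_le_lintegral_enorm g
    _ ≤ ∫⁻ x, ENNReal.ofReal (u x) ^ s * ENNReal.ofReal (v x) ^ t ∂μ := lintegral_mono_ae hg_enorm
    _ ≤ (∫⁻ x, ENNReal.ofReal (u x) ∂μ) ^ s * (∫⁻ x, ENNReal.ofReal (v x) ∂μ) ^ t :=
      ENNReal.lintegral_mul_norm_pow_le hu.aemeasurable.ennreal_ofReal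
        hv.aemeasurable.ennreal_ofReal hs ht hst
    _ = ENNReal.ofReal ((∫ x, u x ∂μ) ^ s * (∫ x, v x ∂μ) ^ t) := by
      rw [← ofReal_integral_eq_lintegral_ofReal hu hu_nonneg,
        ← ofReal_integral_eq_lintegral_ofReal hv hv_nonneg,
        ENNReal.ofReal_rpow_of_nonneg hI_nonneg hs, ENNReal.ofReal_rpow_of_nonneg hJ_nonneg ht,
        ENNReal.ofReal_mul (by positivity)]

end Holder

section Derivative

variable {a b : ℝ}

theorem intervalIntegrable_of_hasDerivAt_of_norm_le {E : Type*} [NormedAddCommGroup E]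
    [NormedSpace ℝ E] [CompleteSpace E] {f f' : ℝ → E} {g : ℝ → ℝ}
    (hderiv : ∀ x ∈ uIoo a b, HasDerivAt f (f' x) x) (hg : IntervalIntegrable g volume a b)
    (hbound : ∀ x ∈ uIoo a b, ‖f' x‖ ≤ g x) : IntervalIntegrable f' volume a b := by
  have hbound_deriv : ∀ᵐ x ∂volume.restrict (uIoc a b), ‖deriv f x‖ ≤ g x := by
    rw [uIoc, ← restrict_Ioo_eq_restrict_Ioc]
    filter_upwards [ae_restrict_mem measurableSet_Ioo] with x hx
    exact (hderiv x hx).deriv ▸ hbound x hx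
  exact (hg.mono_fun' (stronglyMeasurable_deriv f).aestronglyMeasurable hbound_deriv).congr_uIoo
    fun x hx => (hderiv x hx).deriv

theorem integral_pow_succ_mul_deriv (n : ℕ) {f f' : ℝ → ℝ}
    (hderiv : ∀ x ∈ uIcc a b, HasDerivWithinAt f (f' x) (uIcc a b) x)
    (hint : IntervalIntegrable f' volume a b) :
    ∫ x in a..b, x ^ (n + 1) * f' x =
      b ^ (n + 1) * f b - a ^ (n + 1) * f a - (n + 1) * ∫ x in a..b, x ^ n * f x := by
  have hpow (x : ℝ) : HasDerivAt (fun y : ℝ => y ^ (n + 1)) ((n + 1) * x ^ n) x := by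
    simpa using hasDerivAt_pow (n + 1) x
  rw [intervalIntegral.integral_mul_deriv_eq_deriv_mul_of_hasDerivWithinAt
    (fun x _ => (hpow x).hasDerivWithinAt) hderiv
    (Continuous.intervalIntegrable (by fun_prop) a b) hint]
  simp only [mul_assoc, intervalIntegral.integral_const_mul]

end Derivative

section LogMean

variable {x y : ℝ}

theorem L_nonneg (hx : 0 < x) (hy : 0 < y) : 0 ≤ L x y := by
  rcases le_total x y with hxy | hyx
  · exact div_nonneg (sub_nonneg.2 hxy) (sub_nonneg.2 (log_le_log hx hxy))
  · exact div_nonneg_of_nonpos (sub_nonpos.2 hyx) (sub_nonpos.2 (log_le_log hy hyx))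

theorem left_le_L (hx : 0 < x) (hxy : x < y) : x ≤ L x y := by
  have hlog : log y - log x ≤ y / x - 1 := by
    rw [← log_div (hx.trans hxy).ne' hx.ne']
    exact log_le_sub_one_of_pos (div_pos (hx.trans hxy) hx)
  rw [L, le_div_iff₀ (sub_pos.2 (log_lt_log hx hxy))]
  calc
    x * (log y - log x) ≤ x * (y / x - 1) := by gcongr
    _ = y - x := by field_simp

theorem L_le_right (hx : 0 < x) (hxy : x < y) : L x y ≤ y := by
  have hy : 0 < y := hx.trans hxy
  have hlog : log x - log y ≤ x / y - 1 := by
    rw [← log_div hx.ne' hy.ne']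
    exact log_le_sub_one_of_pos (div_pos hx hy)
  rw [L, div_le_iff₀ (sub_pos.2 (log_lt_log hx hxy))]
  calc
    y - x = -(y * (x / y - 1)) := by field_simp; ring
    _ ≤ -(y * (log x - log y)) := by gcongr
    _ = y * (log y - log x) := by ring

end LogMean

/-- The exponent `t` with `x = a ^ (1 - t) * b ^ t`, i.e. the barycentric coordinate of `x` between
`a` and `b` on the logarithmic scale. -/
noncomputable def logCoord (a b x : ℝ) : ℝ := (log x - log a) / (log b - log a)

/-- The function of `x` that is affine in `log x` and equals `A` at `a` and `B` at `b`: the upper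
bound that GA-convexity provides between two points. -/
noncomputable def logInterp (a b A B x : ℝ) : ℝ :=
  (1 - logCoord a b x) * A + logCoord a b x * B

section LogInterpolation

variable {a b x : ℝ}

theorem logCoord_mem_Icc (ha : 0 < a) (hx : x ∈ Icc a b) : logCoord a b x ∈ Icc 0 1 := by
  have hax : log a ≤ log x := log_le_log ha hx.1
  have hxb : log x ≤ log b := log_le_log (ha.trans_le hx.1) hx.2
  exact ⟨div_nonneg (by linarith) (by linarith), div_le_one_of_le₀ (by linarith) (by linarith)⟩

theorem logInterp_nonneg {A B : ℝ} (ha : 0 < a) (hA : 0 ≤ A) (hB : 0 ≤ B) (hx : x ∈ Icc a b) :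
    0 ≤ logInterp a b A B x := by
  obtain ⟨hcoord_nonneg, hcoord_le_one⟩ := logCoord_mem_Icc ha hx
  exact add_nonneg (mul_nonneg (sub_nonneg.2 hcoord_le_one) hA) (mul_nonneg hcoord_nonneg hB)

theorem rpow_logCoord_mul_rpow_one_sub_logCoord (ha : 0 < a) (hab : a < b) (hx : 0 < x) :
    b ^ logCoord a b x * a ^ (1 - logCoord a b x) = x := by
  have hD : log b - log a ≠ 0 := (sub_pos.2 (log_lt_log ha hab)).ne'
  rw [rpow_def_of_pos (ha.trans hab), rpow_def_of_pos ha, ← exp_add, ← exp_log hx, logCoord,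
    log_exp]
  congr 1
  field_simp
  ring

theorem GAConvexOn.le_of_mem_Icc {α m c : ℝ} {h : ℝ → ℝ} (hconv : GAConvexOn α m c h)
    (ha : 0 < a) (hab : a < b) (hm : m ≠ 0) (hac : a ^ (1 / m) ≤ c) (hbc : b ≤ c)
    (hx : x ∈ Icc a b) :
    h x ≤ logCoord a b x ^ α * h b + m * (1 - logCoord a b x ^ α) * h (a ^ (1 / m)) := by
  have hpoint : b ^ logCoord a b x * (a ^ (1 / m)) ^ (m * (1 - logCoord a b x)) = x := by
    rw [← rpow_mul ha.le, ← mul_assoc, one_div_mul_cancel hm, one_mul]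
    exact rpow_logCoord_mul_rpow_one_sub_logCoord ha hab (ha.trans_le hx.1)
  simpa only [hpoint] using hconv b ⟨(ha.trans hab).le, hbc⟩ (a ^ (1 / m))
    ⟨rpow_nonneg ha.le _, hac⟩ _ (logCoord_mem_Icc ha hx)

theorem GAConvexOn.abs_le_logInterp_rpow {m c q : ℝ} {g : ℝ → ℝ}
    (hconv : GAConvexOn 1 m c fun x => |g x| ^ q) (ha : 0 < a) (hab : a < b) (hm : 0 < m)
    (hq : 0 < q) (hac : a ^ (1 / m) ≤ c) (hbc : b ≤ c) (hx : x ∈ Icc a b) :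
    |g x| ≤ logInterp a b (m * |g (a ^ (1 / m))| ^ q) (|g b| ^ q) x ^ (1 / q) := by
  rw [one_div q, le_rpow_inv_iff_of_pos (abs_nonneg _)
    (logInterp_nonneg ha (by positivity) (by positivity) hx) hq]
  have hle := hconv.le_of_mem_Icc ha hab hm.ne' hac hbc hx
  rw [rpow_one] at hle
  rw [logInterp]
  linarith

theorem hasDerivAt_logCoord (a b : ℝ) (hx : x ≠ 0) :
    HasDerivAt (logCoord a b) (x⁻¹ / (log b - log a)) x :=
  ((hasDerivAt_log hx).sub_const _).div_const _

theorem continuousOn_logCoord (ha : 0 < a) : ContinuousOn (logCoord a b) (Icc a b) := fun _ hx =>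
  (hasDerivAt_logCoord a b (ha.trans_le hx.1).ne').continuousAt.continuousWithinAt

theorem continuousOn_logInterp (ha : 0 < a) (A B : ℝ) :
    ContinuousOn (logInterp a b A B) (Icc a b) :=
  ((continuousOn_const.sub (continuousOn_logCoord ha)).mul continuousOn_const).add
    ((continuousOn_logCoord ha).mul continuousOn_const)

theorem intervalIntegrable_of_hasDerivWithinAt_of_abs_le_logInterp_rpow {A B t : ℝ}
    {f f' : ℝ → ℝ} (ha : 0 < a) (hab : a ≤ b) (ht : 0 ≤ t)
    (hderiv : ∀ x ∈ Icc a b, HasDerivWithinAt f (f' x) (Icc a b) x)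
    (hbound : ∀ x ∈ Icc a b, |f' x| ≤ logInterp a b A B x ^ t) :
    IntervalIntegrable f' volume a b := by
  have hmajorant : ContinuousOn (fun x => logInterp a b A B x ^ t) (Icc a b) :=
    (continuousOn_logInterp ha A B).rpow_const fun _ _ => Or.inr ht
  have hIoo : uIoo a b ⊆ Ioo a b := (uIoo_of_le hab).subset
  exact intervalIntegrable_of_hasDerivAt_of_norm_le
    (fun x hx => (hderiv x (Ioo_subset_Icc_self (hIoo hx))).hasDerivAt
      (Icc_mem_nhds (hIoo hx).1 (hIoo hx).2))
    (hmajorant.intervalIntegrable_of_Icc hab)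
    fun x hx => hbound x (Ioo_subset_Icc_self (hIoo hx))

theorem integral_rpow_sub_one {r : ℝ} (ha : 0 < a) (hb : 0 < b) (hr : r ≠ 0) :
    ∫ x in a..b, x ^ (r - 1) = (b ^ r - a ^ r) / r := by
  rw [integral_rpow (Or.inr ⟨by simpa [sub_eq_iff_eq_add] using hr, notMem_uIcc_of_lt ha hb⟩),
    sub_add_cancel]

theorem integral_rpow_sub_one_eq_log_sub_log_mul_L {r : ℝ} (ha : 0 < a) (hab : a < b)
    (hr : r ≠ 0) : ∫ x in a..b, x ^ (r - 1) = (log b - log a) * L (a ^ r) (b ^ r) := by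
  have hD : log b - log a ≠ 0 := (sub_pos.2 (log_lt_log ha hab)).ne'
  rw [integral_rpow_sub_one ha (ha.trans hab) hr, L, log_rpow ha, log_rpow (ha.trans hab),
    ← mul_sub]
  field_simp

theorem integral_logCoord_mul_rpow_sub_one {r : ℝ} (ha : 0 < a) (hab : a < b) (hr : r ≠ 0) :
    ∫ x in a..b, logCoord a b x * x ^ (r - 1) = (b ^ r - L (a ^ r) (b ^ r)) / r := by
  have hD : log b - log a ≠ 0 := (sub_pos.2 (log_lt_log ha hab)).ne'
  have hne : ∀ x ∈ uIcc a b, x ≠ 0 := fun x hx =>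
    ne_of_mem_of_not_mem hx (notMem_uIcc_of_lt ha (ha.trans hab))
  have hrpow : ∀ x ∈ uIcc a b, HasDerivAt (fun y : ℝ => y ^ r / r) (x ^ (r - 1)) x := fun x hx => by
    simpa [hr] using (hasDerivAt_rpow_const (p := r) (Or.inl (hne x hx))).div_const r
  have hinv : IntervalIntegrable (fun x => x⁻¹ / (log b - log a)) volume a b :=
    ((continuousOn_inv₀.mono hne).div_const _).intervalIntegrable
  have hremainder : ∫ x in a..b, x⁻¹ / (log b - log a) * (x ^ r / r) = L (a ^ r) (b ^ r) / r := by
    calc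
      _ = ∫ x in a..b, (r * (log b - log a))⁻¹ * x ^ (r - 1) :=
        intervalIntegral.integral_congr fun x hx => by
          simp only [rpow_sub_one (hne x hx)]
          field_simp
      _ = L (a ^ r) (b ^ r) / r := by
        rw [intervalIntegral.integral_const_mul,
          integral_rpow_sub_one_eq_log_sub_log_mul_L ha hab hr]
        field_simp
  rw [intervalIntegral.integral_mul_deriv_eq_deriv_mul
    (fun x hx => hasDerivAt_logCoord a b (hne x hx)) hrpow hinv
    (intervalIntegral.intervalIntegrable_rpow (Or.inr (notMem_uIcc_of_lt ha (ha.trans hab)))),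
    hremainder]
  simp only [logCoord, div_self hD, sub_self]
  ring

theorem integral_logInterp_mul_rpow_sub_one {r : ℝ} (ha : 0 < a) (hab : a < b) (hr : r ≠ 0)
    (A B : ℝ) :
    ∫ x in a..b, logInterp a b A B x * x ^ (r - 1) =
      (A * (L (a ^ r) (b ^ r) - a ^ r) + (b ^ r - L (a ^ r) (b ^ r)) * B) / r := by
  have hrpow : ContinuousOn (fun x : ℝ => x ^ (r - 1)) (Icc a b) :=
    continuousOn_id.rpow_const fun x hx => Or.inl (ha.trans_le hx.1).ne'
  have hcoord : ContinuousOn (fun x => logCoord a b x * x ^ (r - 1)) (Icc a b) :=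
    (continuousOn_logCoord ha).mul hrpow
  calc
    _ = ∫ x in a..b, A * x ^ (r - 1) + (B - A) * (logCoord a b x * x ^ (r - 1)) := by
      simp only [logInterp]
      congr with x
      ring
    _ = A * ((b ^ r - a ^ r) / r) + (B - A) * ((b ^ r - L (a ^ r) (b ^ r)) / r) := by
      rw [intervalIntegral.integral_add
        ((hrpow.intervalIntegrable_of_Icc hab.le).const_mul A)
        ((hcoord.intervalIntegrable_of_Icc hab.le).const_mul (B - A)),
        intervalIntegral.integral_const_mul, intervalIntegral.integral_const_mul,
        integral_rpow_sub_one ha (ha.trans hab) hr, integral_logCoord_mul_rpow_sub_one ha hab hr]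
    _ = _ := by ring

theorem abs_integral_rpow_mul_le_of_abs_le_logInterp_rpow {A B q r s : ℝ} {g : ℝ → ℝ} (ha : 0 < a)
    (hab : a < b) (hA : 0 ≤ A) (hB : 0 ≤ B) (hq : 1 ≤ q) (hr : r ≠ 0) (hs : s ≠ 0)
    (hg : ∀ x ∈ Icc a b, |g x| ≤ logInterp a b A B x ^ (1 / q)) :
    |∫ x in a..b, x ^ (s * (1 - 1 / q) + r / q - 1) * g x| ≤
      ((log b - log a) * L (a ^ s) (b ^ s)) ^ (1 - 1 / q) *
        ((A * (L (a ^ r) (b ^ r) - a ^ r) + (b ^ r - L (a ^ r) (b ^ r)) * B) / r) ^ (1 / q) := by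
  have hq_pos : 0 < q := by linarith
  have hpos : ∀ x ∈ Ioc a b, 0 < x := fun x hx => ha.trans hx.1
  have hinterp_nonneg : ∀ x ∈ Ioc a b, 0 ≤ logInterp a b A B x := fun x hx =>
    logInterp_nonneg ha hA hB (Ioc_subset_Icc_self hx)
  have hrpow (c : ℝ) : ContinuousOn (fun x : ℝ => x ^ c) (Icc a b) :=
    continuousOn_id.rpow_const fun x hx => Or.inl (ha.trans_le hx.1).ne'
  have hmajorant : ∀ x ∈ Ioc a b, |x ^ (s * (1 - 1 / q) + r / q - 1) * g x| ≤
      (x ^ (s - 1)) ^ (1 - 1 / q) * (logInterp a b A B x * x ^ (r - 1)) ^ (1 / q) := fun x hx => by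
    have hx_pos := hpos x hx
    have hexp : s * (1 - 1 / q) + r / q - 1 = (s - 1) * (1 - 1 / q) + (r - 1) * (1 / q) := by ring
    rw [abs_mul, abs_of_nonneg (by positivity), mul_rpow (hinterp_nonneg x hx) (by positivity),
      ← rpow_mul hx_pos.le, ← rpow_mul hx_pos.le, hexp, rpow_add hx_pos, mul_assoc,
      mul_comm (logInterp a b A B x ^ (1 / q))]
    gcongr
    exact hg x (Ioc_subset_Icc_self hx)
  rw [← integral_rpow_sub_one_eq_log_sub_log_mul_L ha hab hs,
    ← integral_logInterp_mul_rpow_sub_one ha hab hr]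
  simp only [intervalIntegral.integral_of_le hab.le]
  refine abs_integral_le_rpow_integral_mul_rpow_integral
    (sub_nonneg.2 ((div_le_one hq_pos).2 hq)) (by positivity) (sub_add_cancel 1 _)
    ((hrpow _).intervalIntegrable_of_Icc hab.le).1
    (((continuousOn_logInterp ha A B).mul (hrpow _)).intervalIntegrable_of_Icc hab.le).1
    (ae_restrict_of_forall_mem measurableSet_Ioc fun x hx => ?_)
    (ae_restrict_of_forall_mem measurableSet_Ioc fun x hx => ?_)
    (ae_restrict_of_forall_mem measurableSet_Ioc hmajorant)
  · exact rpow_nonneg (hpos x hx).le _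
  · exact mul_nonneg (hinterp_nonneg x hx) (rpow_nonneg (hpos x hx).le _)

theorem abs_integral_rpow_sub_one_mul_le_of_abs_le_logInterp_rpow {A B k p q : ℝ} {g : ℝ → ℝ}
    (ha : 0 < a) (hab : a < b) (hA : 0 ≤ A) (hB : 0 ≤ B) (hq : 1 < q) (hp : 0 < p) (hpq : p ≠ q)
    (hk : 0 < k) (hg : ∀ x ∈ Icc a b, |g x| ≤ logInterp a b A B x ^ (1 / q)) :
    |∫ x in a..b, x ^ (k - 1) * g x| ≤
      (log b - log a) ^ (1 - 1 / q) * (1 / (k * p)) ^ (1 / q) *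
        L (a ^ (k * (q - p) / (q - 1))) (b ^ (k * (q - p) / (q - 1))) ^ (1 - 1 / q) *
        (A * (L (a ^ (k * p)) (b ^ (k * p)) - a ^ (k * p)) +
          (b ^ (k * p) - L (a ^ (k * p)) (b ^ (k * p))) * B) ^ (1 / q) := by
  have hb : 0 < b := ha.trans hab
  have hkp : 0 < k * p := mul_pos hk hp
  have hq_sub_one : q - 1 ≠ 0 := (sub_pos.2 hq).ne'
  have hs : k * (q - p) / (q - 1) ≠ 0 :=
    div_ne_zero (mul_ne_zero hk.ne' (sub_ne_zero.2 hpq.symm)) hq_sub_one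
  have hexp : k * (q - p) / (q - 1) * (1 - 1 / q) + k * p / q - 1 = k - 1 := by
    field_simp
    ring
  have hpow_lt : a ^ (k * p) < b ^ (k * p) := rpow_lt_rpow ha.le hab hkp
  have hleft : 0 ≤ L (a ^ (k * p)) (b ^ (k * p)) - a ^ (k * p) :=
    sub_nonneg.2 (left_le_L (rpow_pos_of_pos ha _) hpow_lt)
  have hright : 0 ≤ b ^ (k * p) - L (a ^ (k * p)) (b ^ (k * p)) :=
    sub_nonneg.2 (L_le_right (rpow_pos_of_pos ha _) hpow_lt)
  have hholder :=
    abs_integral_rpow_mul_le_of_abs_le_logInterp_rpow ha hab hA hB hq.le hkp.ne' hs hg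
  rw [hexp] at hholder
  refine hholder.trans_eq ?_
  rw [mul_rpow (sub_pos.2 (log_lt_log ha hab)).le
      (L_nonneg (rpow_pos_of_pos ha _) (rpow_pos_of_pos hb _)),
    div_eq_mul_one_div (_ + _), mul_rpow (by positivity) (by positivity)]
  ring

end LogInterpolation

theorem stmt_11_general (f f' : ℝ → ℝ) (a b m p q : ℝ) (ha : 0 < a) (hab : a < b)
    (hm : 0 < m) (hq : 1 < q) (hp : 0 < p) (hpq : p ≠ q)
    (hderiv : ∀ x ∈ Icc a b, HasDerivWithinAt f (f' x) (Icc a b) x)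
    (hconv : GAConvexOn 1 m (max (a ^ (1 / m)) b) (fun x => |f' x| ^ q)) :
    |(b ^ 2 * f b - a ^ 2 * f a) / 2 - ∫ x in a..b, x * f x| ≤
      ((log b - log a) ^ (1 - 1 / q) / 2) * (1 / (3 * p)) ^ (1 / q) *
        L (a ^ (3 * (q - p) / (q - 1))) (b ^ (3 * (q - p) / (q - 1))) ^ (1 - 1 / q) *
        (m * (L (a ^ (3 * p)) (b ^ (3 * p)) - a ^ (3 * p)) * |f' (a ^ (1 / m))| ^ q +
          (b ^ (3 * p) - L (a ^ (3 * p)) (b ^ (3 * p))) * |f' b| ^ q) ^ (1 / q) := by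
  have hbound := fun x (hx : x ∈ Icc a b) => hconv.abs_le_logInterp_rpow ha hab hm
    (zero_lt_one.trans hq) (le_max_left _ _) (le_max_right _ _) hx
  have hint : IntervalIntegrable f' volume a b :=
    intervalIntegrable_of_hasDerivWithinAt_of_abs_le_logInterp_rpow ha hab.le (by positivity)
      hderiv hbound
  have hparts : (b ^ 2 * f b - a ^ 2 * f a) / 2 - ∫ x in a..b, x * f x =
      (∫ x in a..b, x ^ 2 * f' x) / 2 := by
    have hparts_two := integral_pow_succ_mul_deriv 1 ((uIcc_of_le hab.le).symm ▸ hderiv) hint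
    norm_num only [pow_one, Nat.cast_one] at hparts_two
    linarith
  have hholder := abs_integral_rpow_sub_one_mul_le_of_abs_le_logInterp_rpow ha hab
    (by positivity) (by positivity) hq hp hpq three_pos hbound
  norm_num only [rpow_two] at hholder
  rw [hparts, abs_div, abs_two, mul_right_comm m]
  linarith

theorem stmt_11 (f f' : ℝ → ℝ) (a b m p q : ℝ) (ha : 0 < a) (hab : a < b)
    (hm : m ∈ Ioc (0:ℝ) 1) (hq : 1 < q) (hp : 0 < p) (hpq : p < q)
    (hderiv : ∀ x ∈ Ici (0:ℝ), HasDerivAt f (f' x) x)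
    (hint : IntervalIntegrable f' volume a b)
    (hconv : GAConvexOn 1 m (max (a ^ (1/m)) b) (fun x => |f' x| ^ q)) :
    |(b ^ 2 * f b - a ^ 2 * f a) / 2 - ∫ x in a..b, x * f x| ≤
      ((Real.log b - Real.log a) ^ (1 - 1/q) / 2) * (1 / (3 * p)) ^ (1/q) *
        L (a ^ (3 * (q - p) / (q - 1))) (b ^ (3 * (q - p) / (q - 1))) ^ (1 - 1/q) *
        (m * (L (a ^ (3 * p)) (b ^ (3 * p)) - a ^ (3 * p)) * |f' (a ^ (1/m))| ^ q +
          (b ^ (3 * p) - L (a ^ (3 * p)) (b ^ (3 * p))) * |f' b| ^ q) ^ (1/q) := by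
  exact stmt_11_general f f' a b m p q ha hab hm.1 hq hp hpq.ne
    (fun x hx => (hderiv x (ha.le.trans hx.1)).hasDerivWithinAt) hconv
end

section
/- Let f, g : [0,∞) → [0,∞) with f·g Lebesgue integrable on [a,b], where 0 < a < b < ∞. Let q ≥ 1 and (α₁,m₁), (α₂,m₂) ∈ (0,1]². If f^q is (α₁,m₁)-GA-convex on [0, max{a^{1/m₁}, b}] and g^q is (α₂,m₂)-GA-convex on [0, max{a^{1/m₂}, b}], then ∫_a^b f(x)·g(x) dx ≤ (ln b − ln a) · [L(a,b)]^{1−1/q} · { m₁·m₂·[L(a,b) − G(α₁,1) − G(α₂,1) + G(α₁+α₂,1)]·f^q(a^{1/m₁})·g^q(a^{1/m₂}) + m₁·[G(α₂,1) − G(α₁+α₂,1)]·f^q(a^{1/m₁})·g^q(b) + m₂·[G(α₁,1) − G(α₁+α₂,1)]·f^q(b)·g^q(a^{1/m₂}) + G(α₁+α₂,1)·f^q(b)·g^q(b) }^{1/q}. -/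
open Real MeasureTheory Set

/-!
The substitution `x = a^{1-t} b^t` turns `∫_a^b F` into `(ln b - ln a) ∫_0^1 γ(t) F(γ(t)) dt` with
weight `γ(t) = a^{1-t} b^t`, whose total mass on `[0,1]` is `L(a,b)`. GA-convexity at the end
points `b` and `a^{1/m}` bounds `f^q ∘ γ` and `g^q ∘ γ` by affine functions of `t^{α₁}` and
`t^{α₂}`. Hölder's inequality for the weight `γ` moves the exponent `1/q` outside the integral, and
expanding the product of the two bounds leaves the moments `G(α,1) = ∫_0^1 γ(t) t^α dt`.
-/

section Holder

variable {Ω : Type*} [MeasurableSpace Ω] {μ : Measure Ω} {p : ℝ}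

lemma integral_rpow_mul_rpow_le {u v : Ω → ℝ} {r : ℝ} (hp : 0 ≤ p) (hr : 0 ≤ r) (hpr : p + r = 1)
    (hu : 0 ≤ᵐ[μ] u) (hv : 0 ≤ᵐ[μ] v) (hui : Integrable u μ) (hvi : Integrable v μ) :
    ∫ x, u x ^ p * v x ^ r ∂μ ≤ (∫ x, u x ∂μ) ^ p * (∫ x, v x ∂μ) ^ r := by
  have hIu : 0 ≤ ∫ x, u x ∂μ := integral_nonneg_of_ae hu
  have hIv : 0 ≤ ∫ x, v x ∂μ := integral_nonneg_of_ae hv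
  have hmeas : AEStronglyMeasurable (fun x => u x ^ p * v x ^ r) μ :=
    ((hui.aemeasurable.pow_const p).mul (hvi.aemeasurable.pow_const r)).aestronglyMeasurable
  have hnonneg : 0 ≤ᵐ[μ] fun x => u x ^ p * v x ^ r := by
    filter_upwards [hu, hv] with x hux hvx
    exact mul_nonneg (rpow_nonneg hux p) (rpow_nonneg hvx r)
  rw [integral_eq_lintegral_of_nonneg_ae hnonneg hmeas]
  refine ENNReal.toReal_le_of_le_ofReal (by positivity) ?_
  calc ∫⁻ x, ENNReal.ofReal (u x ^ p * v x ^ r) ∂μ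
      = ∫⁻ x, ENNReal.ofReal (u x) ^ p * ENNReal.ofReal (v x) ^ r ∂μ := by
        refine lintegral_congr_ae ?_
        filter_upwards [hu, hv] with x hux hvx
        rw [ENNReal.ofReal_mul (rpow_nonneg hux p), ENNReal.ofReal_rpow_of_nonneg hux hp,
          ENNReal.ofReal_rpow_of_nonneg hvx hr]
    _ ≤ (∫⁻ x, ENNReal.ofReal (u x) ∂μ) ^ p * (∫⁻ x, ENNReal.ofReal (v x) ∂μ) ^ r :=
        ENNReal.lintegral_mul_norm_pow_le hui.aemeasurable.ennreal_ofReal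
          hvi.aemeasurable.ennreal_ofReal hp hr hpr
    _ = ENNReal.ofReal ((∫ x, u x ∂μ) ^ p * (∫ x, v x ∂μ) ^ r) := by
        rw [ENNReal.ofReal_mul (by positivity), ← ENNReal.ofReal_rpow_of_nonneg hIu hp,
          ← ENNReal.ofReal_rpow_of_nonneg hIv hr, ofReal_integral_eq_lintegral_ofReal hui hu,
          ofReal_integral_eq_lintegral_ofReal hvi hv]

lemma integral_mul_rpow_le {P w : Ω → ℝ} (hp : p ∈ Icc (0 : ℝ) 1) (hP : 0 ≤ᵐ[μ] P)
    (hw : 0 ≤ᵐ[μ] w) (hwi : Integrable w μ) (hwP : Integrable (fun x => w x * P x) μ) :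
    ∫ x, w x * P x ^ p ∂μ ≤ (∫ x, w x ∂μ) ^ (1 - p) * (∫ x, w x * P x ∂μ) ^ p := by
  have hp' : 0 ≤ 1 - p := sub_nonneg.2 hp.2
  have hwP0 : 0 ≤ᵐ[μ] fun x => w x * P x := by
    filter_upwards [hP, hw] with x hPx hwx using mul_nonneg hwx hPx
  have hsplit : (fun x => w x * P x ^ p) =ᵐ[μ] fun x => w x ^ (1 - p) * (w x * P x) ^ p := by
    filter_upwards [hP, hw] with x hPx hwx
    rw [mul_rpow hwx hPx, ← mul_assoc, ← rpow_add_of_nonneg hwx hp' hp.1, sub_add_cancel, rpow_one]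
  rw [integral_congr_ae hsplit]
  exact integral_rpow_mul_rpow_le hp' hp.1 (sub_add_cancel 1 p) hw hwP0 hwi hwP

end Holder

/-- The weighted geometric mean `a^{1-t} b^t`, viewed as a path from `a` to `b`. -/
noncomputable def geomPath (a b t : ℝ) : ℝ := a ^ (1 - t) * b ^ t

section GeomPath

variable {a b t : ℝ}

@[simp]
lemma geomPath_zero (a b : ℝ) : geomPath a b 0 = a := by simp [geomPath]

@[simp]
lemma geomPath_one (a b : ℝ) : geomPath a b 1 = b := by simp [geomPath]

lemma geomPath_pos (ha : 0 < a) (hb : 0 < b) (t : ℝ) : 0 < geomPath a b t :=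
  mul_pos (rpow_pos_of_pos ha _) (rpow_pos_of_pos hb _)

lemma geomPath_eq_exp (ha : 0 < a) (hb : 0 < b) (t : ℝ) :
    geomPath a b t = exp (log a + t * (log b - log a)) := by
  rw [geomPath, rpow_def_of_pos ha, rpow_def_of_pos hb, ← exp_add]
  ring_nf

lemma hasDerivAt_geomPath (ha : 0 < a) (hb : 0 < b) (t : ℝ) :
    HasDerivAt (geomPath a b) ((log b - log a) * geomPath a b t) t := by
  rw [funext (geomPath_eq_exp ha hb), mul_comm]
  simpa using (((hasDerivAt_id t).mul_const (log b - log a)).const_add (log a)).exp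

lemma continuous_geomPath (ha : 0 < a) (hb : 0 < b) : Continuous (geomPath a b) :=
  continuous_iff_continuousAt.2 fun t => (hasDerivAt_geomPath ha hb t).continuousAt

lemma geomPath_mem_Icc (ha : 0 < a) (hab : a ≤ b) (ht : t ∈ Icc (0 : ℝ) 1) :
    geomPath a b t ∈ Icc a b := by
  have hb : 0 < b := ha.trans_le hab
  have hlog : 0 ≤ log b - log a := sub_nonneg.2 (log_le_log ha hab)
  rw [geomPath_eq_exp ha hb, mem_Icc, ← log_le_iff_le_exp ha, ← le_log_iff_exp_le hb]
  constructor <;> nlinarith [ht.1, ht.2]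

lemma integral_geomPath (ha : 0 < a) (hb : 0 < b) (hab : a ≠ b) :
    ∫ t in 0..1, geomPath a b t = L a b := by
  have hlog : log b - log a ≠ 0 := sub_ne_zero.2 (log_injOn_pos.ne hb ha hab.symm)
  have hftc := intervalIntegral.integral_eq_sub_of_hasDerivAt (a := 0) (b := 1)
    (fun t _ => hasDerivAt_geomPath ha hb t)
    ((continuous_geomPath ha hb).const_mul _ |>.intervalIntegrable _ _)
  rw [intervalIntegral.integral_const_mul, geomPath_zero, geomPath_one] at hftc
  rw [L, eq_div_iff hlog, mul_comm, hftc]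

lemma integral_geomPath_mul_rpow (a b α : ℝ) :
    ∫ t in 0..1, geomPath a b t * t ^ α = G a b α 1 := by
  refine intervalIntegral.integral_congr fun t _ => ?_
  simp only [geomPath, one_mul]
  ring

variable {E : Type*} [NormedAddCommGroup E] [NormedSpace ℝ E]

lemma integral_geomPath_smul_comp_geomPath (ha : 0 < a) (hab : a ≤ b) (F : ℝ → E) :
    (log b - log a) • ∫ t in 0..1, geomPath a b t • F (geomPath a b t) = ∫ x in a..b, F x := by
  have hb : 0 < b := ha.trans_le hab
  have hlog : 0 ≤ log b - log a := sub_nonneg.2 (log_le_log ha hab)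
  have hsubst := intervalIntegral.integral_deriv_smul_comp_of_deriv_nonneg (a := 0) (b := 1)
    (g := F) (continuous_geomPath ha hb).continuousOn (fun t _ => hasDerivAt_geomPath ha hb t)
    fun t _ => mul_nonneg hlog (geomPath_pos ha hb t).le
  simpa only [Function.comp_apply, mul_smul, intervalIntegral.integral_smul, geomPath_zero,
    geomPath_one] using hsubst

lemma intervalIntegrable_geomPath_smul_comp_geomPath_iff (ha : 0 < a) (hab : a < b) {F : ℝ → E} :
    IntervalIntegrable (fun t => geomPath a b t • F (geomPath a b t)) volume 0 1 ↔
      IntervalIntegrable F volume a b := by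
  have hb : 0 < b := ha.trans hab
  have hlog : 0 < log b - log a := sub_pos.2 (log_lt_log ha hab)
  have hsubst := intervalIntegral.integrable_deriv_smul_comp_iff_of_deriv_nonneg (a := 0) (b := 1)
    (g := F) (continuous_geomPath ha hb).continuousOn (fun t _ => hasDerivAt_geomPath ha hb t)
    fun t _ => mul_nonneg hlog.le (geomPath_pos ha hb t).le
  rw [geomPath_zero, geomPath_one] at hsubst
  rw [← hsubst, intervalIntegrable_iff, intervalIntegrable_iff, IntegrableOn, IntegrableOn,
    ← integrable_smul_iff hlog.ne']
  simp only [Function.comp_apply, mul_smul, Pi.smul_def]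

end GeomPath

section PowerMean

variable {a b p q : ℝ} {F P : ℝ → ℝ}

lemma integral_geomPath_mul_fun_rpow_le (ha : 0 < a) (hb : 0 < b) (hab : a ≠ b)
    (hp : p ∈ Icc (0 : ℝ) 1) (hP : Continuous P) (hP0 : ∀ t ∈ Icc (0 : ℝ) 1, 0 ≤ P t) :
    ∫ t in 0..1, geomPath a b t * P t ^ p ≤
      L a b ^ (1 - p) * (∫ t in 0..1, geomPath a b t * P t) ^ p := by
  have hγ : Continuous (geomPath a b) := continuous_geomPath ha hb
  rw [← integral_geomPath ha hb hab]
  simp only [intervalIntegral.integral_of_le zero_le_one]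
  refine integral_mul_rpow_le hp ?_ (ae_of_all _ fun t => (geomPath_pos ha hb t).le)
    hγ.integrableOn_Ioc (hγ.mul hP).integrableOn_Ioc
  exact ae_restrict_of_forall_mem measurableSet_Ioc fun t ht => hP0 t (Ioc_subset_Icc_self ht)

lemma integral_le_of_comp_geomPath_rpow_le (ha : 0 < a) (hab : a < b) (hq : 1 ≤ q)
    (hF : ∀ x ∈ Icc a b, 0 ≤ F x) (hFi : IntervalIntegrable F volume a b) (hP : Continuous P)
    (hFP : ∀ t ∈ Icc (0 : ℝ) 1, F (geomPath a b t) ^ q ≤ P t) :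
    ∫ x in a..b, F x ≤ (log b - log a) * L a b ^ (1 - 1 / q) *
      (∫ t in 0..1, geomPath a b t * P t) ^ (1 / q) := by
  have hb : 0 < b := ha.trans hab
  have hq0 : 0 < q := one_pos.trans_le hq
  have hlog : 0 ≤ log b - log a := sub_nonneg.2 (log_le_log ha hab.le)
  have hp : 1 / q ∈ Icc (0 : ℝ) 1 := ⟨by positivity, (div_le_one hq0).2 hq⟩
  have hFγ : ∀ t ∈ Icc (0 : ℝ) 1, 0 ≤ F (geomPath a b t) := fun t ht =>
    hF _ (geomPath_mem_Icc ha hab.le ht)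
  have hP0 : ∀ t ∈ Icc (0 : ℝ) 1, 0 ≤ P t := fun t ht =>
    (rpow_nonneg (hFγ t ht) q).trans (hFP t ht)
  have hF_le : ∀ t ∈ Icc (0 : ℝ) 1, F (geomPath a b t) ≤ P t ^ (1 / q) := fun t ht => by
    rw [one_div, le_rpow_inv_iff_of_pos (hFγ t ht) (hP0 t ht) hq0]
    exact hFP t ht
  have hroot : Continuous fun t => geomPath a b t * P t ^ (1 / q) :=
    (continuous_geomPath ha hb).mul (hP.rpow_const fun _ => Or.inr hp.1)
  have hmono : ∫ t in 0..1, geomPath a b t * F (geomPath a b t) ≤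
      ∫ t in 0..1, geomPath a b t * P t ^ (1 / q) :=
    intervalIntegral.integral_mono_on zero_le_one
      ((intervalIntegrable_geomPath_smul_comp_geomPath_iff ha hab).2 hFi)
      (hroot.intervalIntegrable 0 1)
      fun t ht => mul_le_mul_of_nonneg_left (hF_le t ht) (geomPath_pos ha hb t).le
  rw [← integral_geomPath_smul_comp_geomPath ha hab.le F, mul_assoc]
  exact mul_le_mul_of_nonneg_left
    (hmono.trans (integral_geomPath_mul_fun_rpow_le ha hb hab.ne hp hP hP0)) hlog

end PowerMean

/-- The right-hand side of the `(α, m)`-GA-convexity inequality as a function of the parameter `t`,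
where `u` is the value at the point weighted by `t` and `v` the value at the other point. -/
noncomputable def gaChord (α m u v t : ℝ) : ℝ := t ^ α * u + m * (1 - t ^ α) * v

section GAChord

lemma continuous_gaChord {α : ℝ} (hα : 0 ≤ α) (m u v : ℝ) : Continuous (gaChord α m u v) := by
  have := continuous_rpow_const hα
  unfold gaChord
  fun_prop

lemma GAConvexOn.apply_geomPath_le {α m a b c t : ℝ} {h : ℝ → ℝ} (hh : GAConvexOn α m c h)
    (ha : 0 ≤ a) (hac : a ^ (1 / m) ≤ c) (hb : b ∈ Icc 0 c) (hm : m ≠ 0)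
    (ht : t ∈ Icc (0 : ℝ) 1) :
    h (geomPath a b t) ≤ gaChord α m (h b) (h (a ^ (1 / m))) t := by
  have hpath : b ^ t * (a ^ (1 / m)) ^ (m * (1 - t)) = geomPath a b t := by
    rw [← rpow_mul ha, ← mul_assoc, one_div_mul_cancel hm, one_mul, mul_comm, geomPath]
  rw [← hpath]
  exact hh b hb _ ⟨rpow_nonneg ha _, hac⟩ t ht

lemma integral_mul_gaChord_mul_gaChord {α₁ α₂ : ℝ} {w : ℝ → ℝ} (hα₁ : 0 ≤ α₁) (hα₂ : 0 ≤ α₂)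
    (hw : IntervalIntegrable w volume 0 1) (m₁ m₂ u₁ v₁ u₂ v₂ : ℝ) :
    ∫ t in 0..1, w t * (gaChord α₁ m₁ u₁ v₁ t * gaChord α₂ m₂ u₂ v₂ t) =
      m₁ * m₂ * ((∫ t in 0..1, w t) - (∫ t in 0..1, w t * t ^ α₁) - (∫ t in 0..1, w t * t ^ α₂) +
          ∫ t in 0..1, w t * t ^ (α₁ + α₂)) * v₁ * v₂ +
        m₁ * ((∫ t in 0..1, w t * t ^ α₂) - ∫ t in 0..1, w t * t ^ (α₁ + α₂)) * v₁ * u₂ +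
        m₂ * ((∫ t in 0..1, w t * t ^ α₁) - ∫ t in 0..1, w t * t ^ (α₁ + α₂)) * u₁ * v₂ +
        (∫ t in 0..1, w t * t ^ (α₁ + α₂)) * u₁ * u₂ := by
  have hwα {α : ℝ} (hα : 0 ≤ α) (c : ℝ) :
      IntervalIntegrable (fun t => c * (w t * t ^ α)) volume 0 1 :=
    (hw.mul_continuousOn (continuous_rpow_const hα).continuousOn).const_mul c
  have hexpand : EqOn (fun t => w t * (gaChord α₁ m₁ u₁ v₁ t * gaChord α₂ m₂ u₂ v₂ t))
      (fun t => m₁ * m₂ * v₁ * v₂ * w t + m₂ * v₂ * (u₁ - m₁ * v₁) * (w t * t ^ α₁) +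
        m₁ * v₁ * (u₂ - m₂ * v₂) * (w t * t ^ α₂) +
        (u₁ - m₁ * v₁) * (u₂ - m₂ * v₂) * (w t * t ^ (α₁ + α₂))) (uIcc 0 1) := fun t ht => by
    rw [uIcc_of_le zero_le_one] at ht
    simp only [gaChord, rpow_add_of_nonneg ht.1 hα₁ hα₂]
    ring
  rw [intervalIntegral.integral_congr hexpand,
    intervalIntegral.integral_add (((hw.const_mul _).add (hwα hα₁ _)).add (hwα hα₂ _))
      (hwα (add_nonneg hα₁ hα₂) _),
    intervalIntegral.integral_add ((hw.const_mul _).add (hwα hα₁ _)) (hwα hα₂ _),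
    intervalIntegral.integral_add (hw.const_mul _) (hwα hα₁ _)]
  simp only [intervalIntegral.integral_const_mul]
  ring

lemma integral_geomPath_mul_gaChord_mul_gaChord {a b α₁ α₂ : ℝ} (ha : 0 < a) (hb : 0 < b)
    (hab : a ≠ b) (hα₁ : 0 ≤ α₁) (hα₂ : 0 ≤ α₂) (m₁ m₂ u₁ v₁ u₂ v₂ : ℝ) :
    ∫ t in 0..1, geomPath a b t * (gaChord α₁ m₁ u₁ v₁ t * gaChord α₂ m₂ u₂ v₂ t) =
      m₁ * m₂ * (L a b - G a b α₁ 1 - G a b α₂ 1 + G a b (α₁ + α₂) 1) * v₁ * v₂ +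
        m₁ * (G a b α₂ 1 - G a b (α₁ + α₂) 1) * v₁ * u₂ +
        m₂ * (G a b α₁ 1 - G a b (α₁ + α₂) 1) * u₁ * v₂ +
        G a b (α₁ + α₂) 1 * u₁ * u₂ := by
  rw [integral_mul_gaChord_mul_gaChord hα₁ hα₂
    ((continuous_geomPath ha hb).intervalIntegrable 0 1)]
  simp only [integral_geomPath ha hb hab, integral_geomPath_mul_rpow]

end GAChord

theorem stmt_12_general {f g : ℝ → ℝ} {a b q α₁ m₁ α₂ m₂ : ℝ} (ha : 0 < a) (hab : a < b)
    (hq : 1 ≤ q) (hα₁ : 0 ≤ α₁) (hm₁ : m₁ ≠ 0) (hα₂ : 0 ≤ α₂) (hm₂ : m₂ ≠ 0)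
    (hf0 : ∀ x ∈ Icc a b, 0 ≤ f x) (hg0 : ∀ x ∈ Icc a b, 0 ≤ g x)
    (hfg : IntervalIntegrable (fun x => f x * g x) volume a b)
    (hfconv : GAConvexOn α₁ m₁ (max (a ^ (1 / m₁)) b) (fun x => f x ^ q))
    (hgconv : GAConvexOn α₂ m₂ (max (a ^ (1 / m₂)) b) (fun x => g x ^ q)) :
    ∫ x in a..b, f x * g x ≤
      (log b - log a) * L a b ^ (1 - 1 / q) *
        (m₁ * m₂ * (L a b - G a b α₁ 1 - G a b α₂ 1 + G a b (α₁ + α₂) 1) *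
            f (a ^ (1 / m₁)) ^ q * g (a ^ (1 / m₂)) ^ q +
          m₁ * (G a b α₂ 1 - G a b (α₁ + α₂) 1) * f (a ^ (1 / m₁)) ^ q * g b ^ q +
          m₂ * (G a b α₁ 1 - G a b (α₁ + α₂) 1) * f b ^ q * g (a ^ (1 / m₂)) ^ q +
          G a b (α₁ + α₂) 1 * f b ^ q * g b ^ q) ^ (1 / q) := by
  have hb : 0 < b := ha.trans hab
  rw [← integral_geomPath_mul_gaChord_mul_gaChord ha hb hab.ne hα₁ hα₂]
  refine integral_le_of_comp_geomPath_rpow_le ha hab hq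
    (fun x hx => mul_nonneg (hf0 x hx) (hg0 x hx)) hfg
    ((continuous_gaChord hα₁ _ _ _).mul (continuous_gaChord hα₂ _ _ _)) fun t ht => ?_
  have hγ := geomPath_mem_Icc ha hab.le ht
  have hf_le := hfconv.apply_geomPath_le ha.le (le_max_left _ _) ⟨hb.le, le_max_right _ _⟩ hm₁ ht
  have hg_le := hgconv.apply_geomPath_le ha.le (le_max_left _ _) ⟨hb.le, le_max_right _ _⟩ hm₂ ht
  rw [mul_rpow (hf0 _ hγ) (hg0 _ hγ)]
  exact mul_le_mul hf_le hg_le (rpow_nonneg (hg0 _ hγ) q)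
    ((rpow_nonneg (hf0 _ hγ) q).trans hf_le)

theorem stmt_12 (f g : ℝ → ℝ) (a b q α₁ m₁ α₂ m₂ : ℝ) (ha : 0 < a) (hab : a < b)
    (hq : 1 ≤ q) (hα₁ : α₁ ∈ Ioc (0:ℝ) 1) (hm₁ : m₁ ∈ Ioc (0:ℝ) 1)
    (hα₂ : α₂ ∈ Ioc (0:ℝ) 1) (hm₂ : m₂ ∈ Ioc (0:ℝ) 1)
    (hf0 : ∀ x ∈ Ici (0:ℝ), 0 ≤ f x) (hg0 : ∀ x ∈ Ici (0:ℝ), 0 ≤ g x)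
    (hfg : IntervalIntegrable (fun x => f x * g x) volume a b)
    (hfconv : GAConvexOn α₁ m₁ (max (a ^ (1/m₁)) b) (fun x => f x ^ q))
    (hgconv : GAConvexOn α₂ m₂ (max (a ^ (1/m₂)) b) (fun x => g x ^ q)) :
    ∫ x in a..b, f x * g x ≤
      (Real.log b - Real.log a) * L a b ^ (1 - 1/q) *
        (m₁ * m₂ * (L a b - G a b α₁ 1 - G a b α₂ 1 + G a b (α₁ + α₂) 1) *
            f (a ^ (1/m₁)) ^ q * g (a ^ (1/m₂)) ^ q +
          m₁ * (G a b α₂ 1 - G a b (α₁ + α₂) 1) * f (a ^ (1/m₁)) ^ q * g b ^ q +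
          m₂ * (G a b α₁ 1 - G a b (α₁ + α₂) 1) * f b ^ q * g (a ^ (1/m₂)) ^ q +
          G a b (α₁ + α₂) 1 * f b ^ q * g b ^ q) ^ (1/q) :=
  stmt_12_general ha hab hq hα₁.1.le hm₁.1.ne' hα₂.1.le hm₂.1.ne'
    (fun x hx => hf0 x (ha.le.trans hx.1)) (fun x hx => hg0 x (ha.le.trans hx.1)) hfg hfconv hgconv
end

section
/- Let f, g : [0,∞) → [0,∞) with f·g Lebesgue integrable on [a,b], where 0 < a < b < ∞. Let (α₁,m₁), (α₂,m₂) ∈ (0,1]². If f is (α₁,m₁)-GA-convex on [0, max{a^{1/m₁}, b}] and g is (α₂,m₂)-GA-convex on [0, max{a^{1/m₂}, b}], then ∫_a^b f(x)·g(x) dx ≤ (ln b − ln a) · { m₁·m₂·[L(a,b) − G(α₁,1) − G(α₂,1) + G(α₁+α₂,1)]·f(a^{1/m₁})·g(a^{1/m₂}) + m₁·[G(α₂,1) − G(α₁+α₂,1)]·f(a^{1/m₁})·g(b) + m₂·[G(α₁,1) − G(α₁+α₂,1)]·f(b)·g(a^{1/m₂}) + G(α₁+α₂,1)·f(b)·g(b)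 }. -/
open Real MeasureTheory Set

/-!
Under the substitution `x = a ^ (1 - t) * b ^ t` the measure `dx` on `[a, b]` becomes
`(log b - log a) * a ^ (1 - t) * b ^ t * dt` on `[0, 1]`, and GA-convexity, applied at the points
`b` and `a ^ (1 / m)`, bounds each factor by an affine function of `t ^ α`. The product of the two
bounds is a combination of `1`, `t ^ α₁`, `t ^ α₂` and `t ^ (α₁ + α₂)`, whose integrals against
`a ^ (1 - t) * b ^ t` are `L a b`, `G a b α₁ 1`, `G a b α₂ 1` and `G a b (α₁ + α₂) 1`.
-/

/-- The weighted geometric mean `a ^ (1 - t) * b ^ t`, regarded as a path from `a` to `b` along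
which the integral is reparametrised. -/
noncomputable def geomInterp (a b t : ℝ) : ℝ := a ^ (1 - t) * b ^ t

/-- The affine interpolation between `v` and `u` with weight `t ^ α`; this is the shape of the upper
bound in `(α, m)`-GA-convexity, the factor `m` being absorbed in `v`. -/
noncomputable def rpowInterp (α u v t : ℝ) : ℝ := t ^ α * u + (1 - t ^ α) * v

section GeomInterp

variable {a b : ℝ}

@[simp]
theorem geomInterp_zero : geomInterp a b 0 = a := by simp [geomInterp]

@[simp]
theorem geomInterp_one : geomInterp a b 1 = b := by simp [geomInterp]

theorem geomInterp_pos (ha : 0 < a) (hb : 0 < b) (t : ℝ) : 0 < geomInterp a b t :=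
  mul_pos (rpow_pos_of_pos ha _) (rpow_pos_of_pos hb _)

theorem geomInterp_mem_Icc (ha : 0 < a) (hab : a ≤ b) {t : ℝ} (ht : t ∈ Icc (0 : ℝ) 1) :
    geomInterp a b t ∈ Icc a b := by
  have hb : 0 < b := ha.trans_le hab
  have geomInterp_self {c : ℝ} (hc : 0 < c) : geomInterp c c t = c := by
    rw [geomInterp, ← rpow_add hc, sub_add_cancel, rpow_one]
  constructor
  · calc a = geomInterp a a t := (geomInterp_self ha).symm
      _ ≤ geomInterp a b t :=
        mul_le_mul_of_nonneg_left (rpow_le_rpow ha.le hab ht.1) (rpow_nonneg ha.le _)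
  · calc geomInterp a b t
        ≤ geomInterp b b t :=
        mul_le_mul_of_nonneg_right (rpow_le_rpow ha.le hab (sub_nonneg.2 ht.2))
          (rpow_nonneg hb.le _)
      _ = b := geomInterp_self hb

theorem hasDerivAt_geomInterp (ha : 0 < a) (hb : 0 < b) (t : ℝ) :
    HasDerivAt (geomInterp a b) (geomInterp a b t * (Real.log b - Real.log a)) t := by
  have deriv_left := ((hasDerivAt_id' t).const_sub 1).const_rpow ha
  have deriv_right := (hasDerivAt_id' t).const_rpow hb
  refine (deriv_left.mul deriv_right).congr_deriv ?_
  rw [geomInterp]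
  ring

theorem continuous_geomInterp (ha : 0 < a) (hb : 0 < b) : Continuous (geomInterp a b) :=
  continuous_iff_continuousAt.2 fun t => (hasDerivAt_geomInterp ha hb t).continuousAt

theorem integral_le_of_comp_geomInterp_le (ha : 0 < a) (hab : a ≤ b) {φ Φ : ℝ → ℝ}
    (hφ : IntervalIntegrable φ volume a b) (hΦ : IntervalIntegrable Φ volume 0 1)
    (hle : ∀ t ∈ Icc (0 : ℝ) 1, φ (geomInterp a b t) ≤ Φ t) :
    ∫ x in a..b, φ x ≤
      (Real.log b - Real.log a) * ∫ t in (0 : ℝ)..1, Φ t * geomInterp a b t := by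
  have hb : 0 < b := ha.trans_le hab
  set K := Real.log b - Real.log a
  have continuous_deriv : Continuous fun t => geomInterp a b t * K :=
    (continuous_geomInterp ha hb).mul_const K
  have deriv_nonneg (t : ℝ) : 0 ≤ geomInterp a b t * K :=
    mul_nonneg (geomInterp_pos ha hb t).le (sub_nonneg.2 (Real.log_le_log ha hab))
  have integrable_comp :
      IntervalIntegrable (fun t => φ (geomInterp a b t) * (geomInterp a b t * K)) volume 0 1 :=
    (intervalIntegral.integrable_comp_mul_deriv_iff_of_deriv_nonneg
      (continuous_geomInterp ha hb).continuousOn (fun t _ => hasDerivAt_geomInterp ha hb t)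
      (fun t _ => deriv_nonneg t)).2 (by simpa using hφ)
  have integral_comp :
      ∫ t in (0 : ℝ)..1, φ (geomInterp a b t) * (geomInterp a b t * K) = ∫ x in a..b, φ x := by
    simpa using intervalIntegral.integral_comp_mul_deriv_of_deriv_nonneg (a := 0) (b := 1) (g := φ)
      (continuous_geomInterp ha hb).continuousOn (fun t _ => hasDerivAt_geomInterp ha hb t)
      (fun t _ => deriv_nonneg t)
  calc ∫ x in a..b, φ x
      = ∫ t in (0 : ℝ)..1, φ (geomInterp a b t) * (geomInterp a b t * K) := integral_comp.symm
    _ ≤ ∫ t in (0 : ℝ)..1, Φ t * (geomInterp a b t * K) :=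
      intervalIntegral.integral_mono_on zero_le_one integrable_comp
        (hΦ.mul_continuousOn continuous_deriv.continuousOn)
        fun t ht => mul_le_mul_of_nonneg_right (hle t ht) (deriv_nonneg t)
    _ = K * ∫ t in (0 : ℝ)..1, Φ t * geomInterp a b t := by
      simp only [← mul_assoc, intervalIntegral.integral_mul_const, mul_comm K]

theorem L_eq_integral_geomInterp (ha : 0 < a) (hb : 0 < b) (hab : a ≠ b) :
    L a b = ∫ t in (0 : ℝ)..1, geomInterp a b t := by
  have log_sub_ne_zero : Real.log b - Real.log a ≠ 0 :=
    sub_ne_zero.2 fun h => hab (Real.log_injOn_pos ha hb h.symm)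
  have integral_deriv :
      (∫ t in (0 : ℝ)..1, geomInterp a b t) * (Real.log b - Real.log a) = b - a := by
    rw [← intervalIntegral.integral_mul_const,
      intervalIntegral.integral_eq_sub_of_hasDerivAt (fun t _ => hasDerivAt_geomInterp ha hb t)
        (((continuous_geomInterp ha hb).mul_const _).intervalIntegrable 0 1),
      geomInterp_zero, geomInterp_one]
  rw [L, ← integral_deriv, mul_div_cancel_right₀ _ log_sub_ne_zero]

theorem G_one_eq_integral_rpow_mul_geomInterp (a b α : ℝ) :
    G a b α 1 = ∫ t in (0 : ℝ)..1, t ^ α * geomInterp a b t := by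
  simp only [G, geomInterp, one_mul, mul_assoc]

end GeomInterp

section RpowInterp

variable {α β : ℝ}

theorem continuous_rpowInterp (hα : 0 ≤ α) (u v : ℝ) : Continuous (rpowInterp α u v) := by
  have := continuous_rpow_const hα
  unfold rpowInterp
  fun_prop

theorem rpowInterp_mul_rpowInterp (hα : 0 ≤ α) (hβ : 0 ≤ β) (u v u' v' : ℝ) {t : ℝ} (ht : 0 ≤ t) :
    rpowInterp α u v t * rpowInterp β u' v' t =
      v * v' + (u - v) * v' * t ^ α + v * (u' - v') * t ^ β +
        (u - v) * (u' - v') * t ^ (α + β) := by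
  rw [rpowInterp, rpowInterp, rpow_add_of_nonneg ht hα hβ]
  ring

theorem integral_rpowInterp_mul_rpowInterp_mul (hα : 0 ≤ α) (hβ : 0 ≤ β) (u v u' v' : ℝ)
    {w : ℝ → ℝ} (hw : IntervalIntegrable w volume 0 1) :
    ∫ t in (0 : ℝ)..1, rpowInterp α u v t * rpowInterp β u' v' t * w t =
      v * v' * (∫ t in (0 : ℝ)..1, w t) +
        (u - v) * v' * (∫ t in (0 : ℝ)..1, t ^ α * w t) +
        v * (u' - v') * (∫ t in (0 : ℝ)..1, t ^ β * w t) +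
        (u - v) * (u' - v') * ∫ t in (0 : ℝ)..1, t ^ (α + β) * w t := by
  have integrable_rpow_mul {s : ℝ} (hs : 0 ≤ s) (c : ℝ) :
      IntervalIntegrable (fun t => c * (t ^ s * w t)) volume 0 1 :=
    (hw.continuousOn_mul (continuous_rpow_const hs).continuousOn).const_mul c
  have expand : ∀ t ∈ uIcc (0 : ℝ) 1,
      rpowInterp α u v t * rpowInterp β u' v' t * w t =
        v * v' * w t + (u - v) * v' * (t ^ α * w t) + v * (u' - v') * (t ^ β * w t) +
          (u - v) * (u' - v') * (t ^ (α + β) * w t) := by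
    intro t ht
    rw [uIcc_of_le zero_le_one] at ht
    rw [rpowInterp_mul_rpowInterp hα hβ u v u' v' ht.1]
    ring
  have h₀ := hw.const_mul (v * v')
  have h₁ := integrable_rpow_mul hα ((u - v) * v')
  have h₂ := integrable_rpow_mul hβ (v * (u' - v'))
  have h₃ := integrable_rpow_mul (add_nonneg hα hβ) ((u - v) * (u' - v'))
  rw [intervalIntegral.integral_congr expand,
    intervalIntegral.integral_add ((h₀.add h₁).add h₂) h₃,
    intervalIntegral.integral_add (h₀.add h₁) h₂, intervalIntegral.integral_add h₀ h₁]
  simp only [intervalIntegral.integral_const_mul]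

theorem integral_rpowInterp_mul_rpowInterp_mul_geomInterp {a b : ℝ} (ha : 0 < a) (hb : 0 < b)
    (hab : a ≠ b) (hα : 0 ≤ α) (hβ : 0 ≤ β) (u v u' v' : ℝ) :
    ∫ t in (0 : ℝ)..1, rpowInterp α u v t * rpowInterp β u' v' t * geomInterp a b t =
      (L a b - G a b α 1 - G a b β 1 + G a b (α + β) 1) * (v * v') +
        (G a b β 1 - G a b (α + β) 1) * (v * u') +
        (G a b α 1 - G a b (α + β) 1) * (u * v') +
        G a b (α + β) 1 * (u * u') := by
  rw [integral_rpowInterp_mul_rpowInterp_mul hα hβ u v u' v'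
      ((continuous_geomInterp ha hb).intervalIntegrable 0 1),
    ← L_eq_integral_geomInterp ha hb hab]
  simp only [← G_one_eq_integral_rpow_mul_geomInterp]
  ring

end RpowInterp

theorem GAConvexOn.apply_geomInterp_le {h : ℝ → ℝ} {a b c α m t : ℝ} (hh : GAConvexOn α m c h)
    (ha : 0 ≤ a) (hm : m ≠ 0) (hac : a ^ (1 / m) ≤ c) (hb : b ∈ Icc 0 c)
    (ht : t ∈ Icc (0 : ℝ) 1) :
    h (geomInterp a b t) ≤ rpowInterp α (h b) (m * h (a ^ (1 / m))) t := by
  have root_rpow : (a ^ (1 / m)) ^ (m * (1 - t)) = a ^ (1 - t) := by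
    rw [← rpow_mul ha, ← mul_assoc, one_div_mul_cancel hm, one_mul]
  calc h (geomInterp a b t)
      = h (b ^ t * (a ^ (1 / m)) ^ (m * (1 - t))) := by rw [root_rpow, geomInterp, mul_comm]
    _ ≤ t ^ α * h b + m * (1 - t ^ α) * h (a ^ (1 / m)) :=
      hh b hb (a ^ (1 / m)) ⟨rpow_nonneg ha _, hac⟩ t ht
    _ = rpowInterp α (h b) (m * h (a ^ (1 / m))) t := by rw [rpowInterp]; ring

theorem stmt_13_general (f g : ℝ → ℝ) (a b α₁ m₁ α₂ m₂ : ℝ) (ha : 0 < a) (hab : a < b)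
    (hα₁ : 0 ≤ α₁) (hm₁ : m₁ ≠ 0) (hα₂ : 0 ≤ α₂) (hm₂ : m₂ ≠ 0)
    (hf0 : ∀ x ∈ Icc a b, 0 ≤ f x) (hg0 : ∀ x ∈ Icc a b, 0 ≤ g x)
    (hfg : IntervalIntegrable (fun x => f x * g x) volume a b)
    (hfconv : GAConvexOn α₁ m₁ (max (a ^ (1 / m₁)) b) f)
    (hgconv : GAConvexOn α₂ m₂ (max (a ^ (1 / m₂)) b) g) :
    ∫ x in a..b, f x * g x ≤
      (Real.log b - Real.log a) *
        (m₁ * m₂ * (L a b - G a b α₁ 1 - G a b α₂ 1 + G a b (α₁ + α₂) 1) *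
            f (a ^ (1 / m₁)) * g (a ^ (1 / m₂)) +
          m₁ * (G a b α₂ 1 - G a b (α₁ + α₂) 1) * f (a ^ (1 / m₁)) * g b +
          m₂ * (G a b α₁ 1 - G a b (α₁ + α₂) 1) * f b * g (a ^ (1 / m₂)) +
          G a b (α₁ + α₂) 1 * f b * g b) := by
  have hb : 0 < b := ha.trans hab
  have product_le : ∀ t ∈ Icc (0 : ℝ) 1, f (geomInterp a b t) * g (geomInterp a b t) ≤
      rpowInterp α₁ (f b) (m₁ * f (a ^ (1 / m₁))) t *
        rpowInterp α₂ (g b) (m₂ * g (a ^ (1 / m₂))) t := by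
    intro t ht
    have hx : geomInterp a b t ∈ Icc a b := geomInterp_mem_Icc ha hab.le ht
    have f_le := hfconv.apply_geomInterp_le ha.le hm₁ (le_max_left _ _) ⟨hb.le, le_max_right _ _⟩ ht
    have g_le := hgconv.apply_geomInterp_le ha.le hm₂ (le_max_left _ _) ⟨hb.le, le_max_right _ _⟩ ht
    exact mul_le_mul f_le g_le (hg0 _ hx) ((hf0 _ hx).trans f_le)
  have bound_continuous := (continuous_rpowInterp hα₁ (f b) (m₁ * f (a ^ (1 / m₁)))).fun_mul
    (continuous_rpowInterp hα₂ (g b) (m₂ * g (a ^ (1 / m₂))))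
  refine (integral_le_of_comp_geomInterp_le ha hab.le hfg
    (bound_continuous.intervalIntegrable 0 1) product_le).trans_eq ?_
  rw [integral_rpowInterp_mul_rpowInterp_mul_geomInterp ha hb hab.ne hα₁ hα₂]
  ring

theorem stmt_13 (f g : ℝ → ℝ) (a b α₁ m₁ α₂ m₂ : ℝ) (ha : 0 < a) (hab : a < b)
    (hα₁ : α₁ ∈ Ioc (0:ℝ) 1) (hm₁ : m₁ ∈ Ioc (0:ℝ) 1)
    (hα₂ : α₂ ∈ Ioc (0:ℝ) 1) (hm₂ : m₂ ∈ Ioc (0:ℝ) 1)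
    (hf0 : ∀ x ∈ Ici (0:ℝ), 0 ≤ f x) (hg0 : ∀ x ∈ Ici (0:ℝ), 0 ≤ g x)
    (hfg : IntervalIntegrable (fun x => f x * g x) volume a b)
    (hfconv : GAConvexOn α₁ m₁ (max (a ^ (1/m₁)) b) f)
    (hgconv : GAConvexOn α₂ m₂ (max (a ^ (1/m₂)) b) g) :
    ∫ x in a..b, f x * g x ≤
      (Real.log b - Real.log a) *
        (m₁ * m₂ * (L a b - G a b α₁ 1 - G a b α₂ 1 + G a b (α₁ + α₂) 1) *
            f (a ^ (1/m₁)) * g (a ^ (1/m₂)) +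
          m₁ * (G a b α₂ 1 - G a b (α₁ + α₂) 1) * f (a ^ (1/m₁)) * g b +
          m₂ * (G a b α₁ 1 - G a b (α₁ + α₂) 1) * f b * g (a ^ (1/m₂)) +
          G a b (α₁ + α₂) 1 * f b * g b) :=
  stmt_13_general f g a b α₁ m₁ α₂ m₂ ha hab hα₁.1.le hm₁.1.ne' hα₂.1.le hm₂.1.ne'
    (fun x hx => hf0 x (ha.le.trans hx.1)) (fun x hx => hg0 x (ha.le.trans hx.1)) hfg hfconv hgconv
end

section
/- Let f, g : [0,∞) → [0,∞) with f·g Lebesgue integrable on [a,b], where 0 < a < b < ∞. Let q > 1 and (α₁,m₁), (α₂,m₂) ∈ (0,1]². If f^q is (α₁,m₁)-GA-convex on [0, max{a^{1/m₁}, b}] and g^{q/(q−1)} is (α₂,m₂)-GA-convex on [0, max{a^{1/m₂}, b}], then ∫_a^b f(x)·g(x) dx ≤ (ln b − ln a) · { m₁·f^q(a^{1/m₁})·L(a,b) + G(α₁,1)·[f^q(b) − m₁·f^q(a^{1/m₁})] }^{1/q} · { m₂·g^{q/(q−1)}(a^{1/m₂})·L(a,b) + G(α₂,1)·[g^{q/(q−1)}(b)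 − m₂·g^{q/(q−1)}(a^{1/m₂})] }^{1−1/q}. -/
open Real MeasureTheory Set

/-!
For `x` in `[a, b]` put `t = (ln x - ln a) / (ln b - ln a)`.  Then
`x = b ^ t * (a ^ (1/m)) ^ (m * (1 - t))`, so GA-convexity bounds `f ^ p` and `g ^ q` by explicit
continuous functions of `t`.  Hölder's inequality is applied to these majorants, because `f ^ p` and
`g ^ q` themselves need not be measurable, and the substitution `x = a ^ (1 - t) * b ^ t` evaluates
the integrals of the majorants.
-/

section Holder

variable {X : Type*} [MeasurableSpace X] {μ : Measure X} {p q : ℝ} {u v U V : X → ℝ}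

lemma memLp_rpow_inv (hp : 0 < p) (hU₀ : 0 ≤ᵐ[μ] U) (hU : Integrable U μ) :
    MemLp (fun x => U x ^ p⁻¹) (ENNReal.ofReal p) μ := by
  have h := (memLp_one_iff_integrable.2 hU).norm_rpow_div (ENNReal.ofReal p⁻¹)
  rw [ENNReal.toReal_ofReal (inv_nonneg.2 hp.le), ENNReal.ofReal_inv_of_pos hp, one_div,
    inv_inv] at h
  refine (memLp_congr_ae ?_).1 h
  filter_upwards [hU₀] with x hx
  rw [norm_of_nonneg hx]

lemma integral_rpow_inv_mul_rpow_inv_le (hpq : p.HolderConjugate q) (hU₀ : 0 ≤ᵐ[μ] U)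
    (hV₀ : 0 ≤ᵐ[μ] V) (hU : Integrable U μ) (hV : Integrable V μ) :
    ∫ x, U x ^ p⁻¹ * V x ^ q⁻¹ ∂μ ≤ (∫ x, U x ∂μ) ^ p⁻¹ * (∫ x, V x ∂μ) ^ q⁻¹ := by
  have rpow_cancel {r : ℝ} (hr : r ≠ 0) {W : X → ℝ} (hW : 0 ≤ᵐ[μ] W) :
      ∫ x, (W x ^ r⁻¹) ^ r ∂μ = ∫ x, W x ∂μ :=
    integral_congr_ae (hW.mono fun x hx => rpow_inv_rpow hx hr)
  simpa only [rpow_cancel hpq.ne_zero hU₀, rpow_cancel hpq.symm.ne_zero hV₀, one_div] using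
    integral_mul_le_Lp_mul_Lq_of_nonneg hpq (hU₀.mono fun x hx => rpow_nonneg hx _)
      (hV₀.mono fun x hx => rpow_nonneg hx _) (memLp_rpow_inv hpq.pos hU₀ hU)
      (memLp_rpow_inv hpq.symm.pos hV₀ hV)

lemma integral_mul_le_of_rpow_le (hpq : p.HolderConjugate q) (hu : 0 ≤ᵐ[μ] u) (hv : 0 ≤ᵐ[μ] v)
    (huv : Integrable (fun x => u x * v x) μ) (hU : Integrable U μ) (hV : Integrable V μ)
    (huU : ∀ᵐ x ∂μ, u x ^ p ≤ U x) (hvV : ∀ᵐ x ∂μ, v x ^ q ≤ V x) :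
    ∫ x, u x * v x ∂μ ≤ (∫ x, U x ∂μ) ^ p⁻¹ * (∫ x, V x ∂μ) ^ q⁻¹ := by
  have hU₀ : 0 ≤ᵐ[μ] U := by
    filter_upwards [hu, huU] with x hx hxU using (rpow_nonneg hx p).trans hxU
  have hV₀ : 0 ≤ᵐ[μ] V := by
    filter_upwards [hv, hvV] with x hx hxV using (rpow_nonneg hx q).trans hxV
  have := hpq.ennrealOfReal
  have hUV : Integrable (fun x => U x ^ p⁻¹ * V x ^ q⁻¹) μ :=
    (memLp_rpow_inv hpq.pos hU₀ hU).integrable_mul (memLp_rpow_inv hpq.symm.pos hV₀ hV)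
  refine (integral_mono_ae huv hUV ?_).trans
    (integral_rpow_inv_mul_rpow_inv_le hpq hU₀ hV₀ hU hV)
  filter_upwards [hu, hv, hU₀, hV₀, huU, hvV] with x hux hvx hUx hVx huUx hvVx
  exact mul_le_mul ((le_rpow_inv_iff_of_pos hux hUx hpq.pos).2 huUx)
    ((le_rpow_inv_iff_of_pos hvx hVx hpq.symm.pos).2 hvVx) hvx (rpow_nonneg hUx _)

end Holder

section LogParam

variable {a b : ℝ}

/-- The logarithmic coordinate on `[a, b]`: the `t` for which `x = a ^ (1 - t) * b ^ t`. -/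
noncomputable def logParam (a b x : ℝ) : ℝ := (log x - log a) / (log b - log a)

lemma log_sub_log_pos (ha : 0 < a) (hab : a < b) : 0 < log b - log a :=
  sub_pos.2 (log_lt_log ha hab)

lemma logParam_mem_Icc (ha : 0 < a) (hab : a < b) {x : ℝ} (hx : x ∈ Icc a b) :
    logParam a b x ∈ Icc (0 : ℝ) 1 := by
  have hd := log_sub_log_pos ha hab
  have hax : log a ≤ log x := log_le_log ha hx.1
  have hxb : log x ≤ log b := log_le_log (ha.trans_le hx.1) hx.2
  exact ⟨div_nonneg (sub_nonneg.2 hax) hd.le, (div_le_one hd).2 (sub_le_sub_right hxb _)⟩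

lemma log_rpow_mul_rpow (ha : 0 < a) (hb : 0 < b) (s t : ℝ) :
    log (a ^ s * b ^ t) = s * log a + t * log b := by
  rw [log_mul (rpow_pos_of_pos ha s).ne' (rpow_pos_of_pos hb t).ne', log_rpow ha, log_rpow hb]

lemma rpow_mul_rpow_logParam (ha : 0 < a) (hab : a < b) {x : ℝ} (hx : 0 < x) :
    a ^ (1 - logParam a b x) * b ^ logParam a b x = x := by
  have hb := ha.trans hab
  have hd := (log_sub_log_pos ha hab).ne'
  refine log_injOn_pos (mem_Ioi.2 (by positivity)) hx ?_
  rw [log_rpow_mul_rpow ha hb, logParam]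
  field_simp
  ring

lemma logParam_rpow_mul_rpow (ha : 0 < a) (hab : a < b) (t : ℝ) :
    logParam a b (a ^ (1 - t) * b ^ t) = t := by
  rw [logParam, log_rpow_mul_rpow ha (ha.trans hab), div_eq_iff (log_sub_log_pos ha hab).ne']
  ring

lemma continuousOn_logParam : ContinuousOn (logParam a b) {0}ᶜ :=
  (continuousOn_log.sub continuousOn_const).div_const _

lemma hasDerivAt_rpow_mul_rpow (ha : 0 < a) (hb : 0 < b) (t : ℝ) :
    HasDerivAt (fun t => a ^ (1 - t) * b ^ t)
      ((log b - log a) * (a ^ (1 - t) * b ^ t)) t := by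
  refine ((((hasDerivAt_id' t).const_sub 1).const_rpow ha).fun_mul
    ((hasDerivAt_id' t).const_rpow hb)).congr_deriv ?_
  ring

lemma integral_eq_integral_rpow_mul_rpow (ha : 0 < a) (hab : a < b) (φ : ℝ → ℝ) :
    ∫ x in a..b, φ x = (log b - log a) *
      ∫ t in (0 : ℝ)..1, φ (a ^ (1 - t) * b ^ t) * (a ^ (1 - t) * b ^ t) := by
  have hb := ha.trans hab
  have hd := log_sub_log_pos ha hab
  have hderiv := hasDerivAt_rpow_mul_rpow ha hb
  have h := intervalIntegral.integral_comp_mul_deriv_of_deriv_nonneg (a := 0) (b := 1) (g := φ)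
    (fun t _ => (hderiv t).continuousAt.continuousWithinAt)
    (fun t _ => hderiv t) (fun t _ => by positivity)
  simp only [sub_zero, sub_self, rpow_zero, rpow_one, mul_one, one_mul] at h
  rw [← h, ← intervalIntegral.integral_const_mul]
  simp only [Function.comp_apply, mul_left_comm]

lemma integral_logParam_rpow (ha : 0 < a) (hab : a < b) (α : ℝ) :
    ∫ x in a..b, logParam a b x ^ α = (log b - log a) * G a b α 1 := by
  rw [integral_eq_integral_rpow_mul_rpow ha hab, G]
  simp only [logParam_rpow_mul_rpow ha hab, one_mul, mul_assoc]

lemma log_sub_log_mul_L (ha : 0 < a) (hab : a < b) : (log b - log a) * L a b = b - a :=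
  mul_div_cancel₀ _ (log_sub_log_pos ha hab).ne'

end LogParam

section Majorant

variable {a b α m : ℝ} {h : ℝ → ℝ}

/-- The upper bound for `h` on `[a, b]` obtained from `(α, m)`-GA-convexity by interpolating between
the points `b` and `a ^ (1/m)`. -/
noncomputable def gaMajorant (a b α m : ℝ) (h : ℝ → ℝ) (x : ℝ) : ℝ :=
  m * h (a ^ (1 / m)) + logParam a b x ^ α * (h b - m * h (a ^ (1 / m)))

lemma GAConvexOn.le_gaMajorant (hh : GAConvexOn α m (max (a ^ (1 / m)) b) h) (ha : 0 < a)
    (hab : a < b) (hm : m ≠ 0) {x : ℝ} (hx : x ∈ Icc a b) : h x ≤ gaMajorant a b α m h x := by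
  have hconv := hh b ⟨(ha.trans hab).le, le_max_right _ _⟩ (a ^ (1 / m))
    ⟨rpow_nonneg ha.le _, le_max_left _ _⟩ _ (logParam_mem_Icc ha hab hx)
  rw [← rpow_mul ha.le, ← mul_assoc, one_div_mul_cancel hm, one_mul, mul_comm (b ^ _),
    rpow_mul_rpow_logParam ha hab (ha.trans_le hx.1)] at hconv
  rw [gaMajorant]
  linarith

lemma intervalIntegrable_logParam_rpow (ha : 0 < a) (hb : 0 < b) (hα : 0 ≤ α) :
    IntervalIntegrable (fun x => logParam a b x ^ α) volume a b := by
  refine ContinuousOn.intervalIntegrable ?_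
  refine (continuousOn_logParam.mono fun x hx => ?_).rpow_const fun _ _ => Or.inr hα
  exact ((lt_min ha hb).trans_le hx.1).ne'

lemma intervalIntegrable_gaMajorant (ha : 0 < a) (hb : 0 < b) (hα : 0 ≤ α) :
    IntervalIntegrable (gaMajorant a b α m h) volume a b :=
  intervalIntegrable_const.add ((intervalIntegrable_logParam_rpow ha hb hα).mul_const _)

lemma integral_gaMajorant (ha : 0 < a) (hab : a < b) (hα : 0 ≤ α) :
    ∫ x in a..b, gaMajorant a b α m h x = (log b - log a) *
      (m * h (a ^ (1 / m)) * L a b + G a b α 1 * (h b - m * h (a ^ (1 / m)))) := by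
  have hint := intervalIntegrable_logParam_rpow ha (ha.trans hab) hα
  simp only [gaMajorant]
  rw [intervalIntegral.integral_add intervalIntegrable_const (hint.mul_const _),
    intervalIntegral.integral_const, intervalIntegral.integral_mul_const,
    integral_logParam_rpow ha hab, ← log_sub_log_mul_L ha hab, smul_eq_mul]
  ring

lemma GAConvexOn.bound_nonneg (hh : GAConvexOn α m (max (a ^ (1 / m)) b) h) (ha : 0 < a)
    (hab : a < b) (hα : 0 ≤ α) (hm : m ≠ 0) (h₀ : ∀ x ∈ Icc a b, 0 ≤ h x) :
    0 ≤ m * h (a ^ (1 / m)) * L a b + G a b α 1 * (h b - m * h (a ^ (1 / m))) := by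
  refine nonneg_of_mul_nonneg_right ?_ (log_sub_log_pos ha hab)
  rw [← integral_gaMajorant ha hab hα]
  exact intervalIntegral.integral_nonneg hab.le fun x hx =>
    (h₀ x hx).trans (hh.le_gaMajorant ha hab hm hx)

end Majorant

lemma mul_rpow_inv_mul_mul_rpow_inv {p q c x y : ℝ} (hpq : p.HolderConjugate q) (hc : 0 < c)
    (hx : 0 ≤ x) (hy : 0 ≤ y) :
    (c * x) ^ p⁻¹ * (c * y) ^ q⁻¹ = c * x ^ p⁻¹ * y ^ q⁻¹ := by
  rw [mul_rpow hc.le hx, mul_rpow hc.le hy, mul_mul_mul_comm, ← rpow_add hc,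
    hpq.inv_add_inv_eq_one, rpow_one, mul_assoc]

theorem stmt_16_general {f g : ℝ → ℝ} {a b p q α₁ m₁ α₂ m₂ : ℝ} (ha : 0 < a) (hab : a < b)
    (hpq : p.HolderConjugate q) (hα₁ : 0 ≤ α₁) (hm₁ : 0 < m₁) (hα₂ : 0 ≤ α₂) (hm₂ : 0 < m₂)
    (hf₀ : ∀ x ∈ Icc a b, 0 ≤ f x) (hg₀ : ∀ x ∈ Icc a b, 0 ≤ g x)
    (hfg : IntervalIntegrable (fun x => f x * g x) volume a b)
    (hf : GAConvexOn α₁ m₁ (max (a ^ (1 / m₁)) b) (fun x => f x ^ p))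
    (hg : GAConvexOn α₂ m₂ (max (a ^ (1 / m₂)) b) (fun x => g x ^ q)) :
    ∫ x in a..b, f x * g x ≤ (log b - log a) *
      (m₁ * f (a ^ (1 / m₁)) ^ p * L a b +
        G a b α₁ 1 * (f b ^ p - m₁ * f (a ^ (1 / m₁)) ^ p)) ^ p⁻¹ *
      (m₂ * g (a ^ (1 / m₂)) ^ q * L a b +
        G a b α₂ 1 * (g b ^ q - m₂ * g (a ^ (1 / m₂)) ^ q)) ^ q⁻¹ := by
  have hb := ha.trans hab
  have ae_of_Icc {P : ℝ → Prop} (hP : ∀ x ∈ Icc a b, P x) :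
      ∀ᵐ x ∂volume.restrict (Ioc a b), P x :=
    ae_restrict_of_forall_mem measurableSet_Ioc fun x hx => hP x (Ioc_subset_Icc_self hx)
  have holder := integral_mul_le_of_rpow_le hpq (ae_of_Icc hf₀) (ae_of_Icc hg₀) hfg.1
    (intervalIntegrable_gaMajorant ha hb hα₁).1 (intervalIntegrable_gaMajorant ha hb hα₂).1
    (ae_of_Icc fun x => hf.le_gaMajorant ha hab hm₁.ne')
    (ae_of_Icc fun x => hg.le_gaMajorant ha hab hm₂.ne')
  simp only [← intervalIntegral.integral_of_le hab.le, integral_gaMajorant ha hab hα₁,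
    integral_gaMajorant ha hab hα₂] at holder
  rwa [mul_rpow_inv_mul_mul_rpow_inv hpq (log_sub_log_pos ha hab)
    (hf.bound_nonneg ha hab hα₁ hm₁.ne' fun x hx => rpow_nonneg (hf₀ x hx) p)
    (hg.bound_nonneg ha hab hα₂ hm₂.ne' fun x hx => rpow_nonneg (hg₀ x hx) q)] at holder

theorem stmt_16 (f g : ℝ → ℝ) (a b q α₁ m₁ α₂ m₂ : ℝ) (ha : 0 < a) (hab : a < b)
    (hq : 1 < q) (hα₁ : α₁ ∈ Ioc (0:ℝ) 1) (hm₁ : m₁ ∈ Ioc (0:ℝ) 1)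
    (hα₂ : α₂ ∈ Ioc (0:ℝ) 1) (hm₂ : m₂ ∈ Ioc (0:ℝ) 1)
    (hf0 : ∀ x ∈ Ici (0:ℝ), 0 ≤ f x) (hg0 : ∀ x ∈ Ici (0:ℝ), 0 ≤ g x)
    (hfg : IntervalIntegrable (fun x => f x * g x) volume a b)
    (hfconv : GAConvexOn α₁ m₁ (max (a ^ (1/m₁)) b) (fun x => f x ^ q))
    (hgconv : GAConvexOn α₂ m₂ (max (a ^ (1/m₂)) b) (fun x => g x ^ (q / (q - 1)))) :
    ∫ x in a..b, f x * g x ≤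
      (Real.log b - Real.log a) *
        (m₁ * f (a ^ (1/m₁)) ^ q * L a b +
          G a b α₁ 1 * (f b ^ q - m₁ * f (a ^ (1/m₁)) ^ q)) ^ (1/q) *
        (m₂ * g (a ^ (1/m₂)) ^ (q / (q - 1)) * L a b +
          G a b α₂ 1 * (g b ^ (q / (q - 1)) - m₂ * g (a ^ (1/m₂)) ^ (q / (q - 1)))) ^ (1 - 1/q) := by
  have hconj : q.HolderConjugate (q / (q - 1)) := .conjExponent hq
  simpa only [one_div, hconj.one_sub_inv] using
    stmt_16_general ha hab hconj hα₁.1.le hm₁.1 hα₂.1.le hm₂.1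
      (fun x hx => hf0 x (ha.le.trans hx.1)) (fun x hx => hg0 x (ha.le.trans hx.1)) hfg
      hfconv hgconv
end

section
/- Let f, g : [0,∞) → [0,∞) with f·g Lebesgue integrable on [a,b], where 0 < a < b < ∞, and let q > 1. If f^q and g^{q/(q−1)} are both (1,1)-GA-convex on [0,b] (i.e. GA-convex), then ∫_a^b f(x)·g(x) dx ≤ { f^q(a)·[L(a,b) − a] + [b − L(a,b)]·f^q(b) }^{1/q} · { g^{q/(q−1)}(a)·[L(a,b) − a] + [b − L(a,b)]·g^{q/(q−1)}(b) }^{1−1/q}. -/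
open Real MeasureTheory Set

/-! In the variable `t = log x`, GA-convexity is ordinary convexity, so `f ^ p` and `g ^ q` lie on
`[a, b]` below their chords in `log x`. Hölder's inequality, applied to the `p`-th and `q`-th roots
of these chords, bounds `∫ f g` by `(∫ P) ^ (1 / p) * (∫ Q) ^ (1 / q)` where `P` and `Q` are the
chords, and the integral of a chord is a combination of its end values with weights `L a b - a` and
`b - L a b`. -/

section Holder

variable {α : Type*} [MeasurableSpace α] {μ : Measure α} {p q : ℝ} {P Q : α → ℝ}

lemma memLp_rpow_one_div_of_integrable (hp : 0 < p) (hP : Integrable P μ) (hP₀ : 0 ≤ᵐ[μ] P) :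
    MemLp (fun x => P x ^ (1 / p)) (ENNReal.ofReal p) μ := by
  have h := (memLp_one_iff_integrable.2 hP).norm_rpow_div (ENNReal.ofReal p)⁻¹
  rw [ENNReal.toReal_inv, ENNReal.toReal_ofReal hp.le, one_div, inv_inv, ← one_div] at h
  refine h.ae_eq ?_
  filter_upwards [hP₀] with x hx
  rw [norm_of_nonneg hx]

lemma integral_rpow_one_div_rpow (hp : p ≠ 0) (hP₀ : 0 ≤ᵐ[μ] P) :
    ∫ x, (P x ^ (1 / p)) ^ p ∂μ = ∫ x, P x ∂μ := by
  refine integral_congr_ae ?_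
  filter_upwards [hP₀] with x hx
  rw [one_div, rpow_inv_rpow hx hp]

lemma integral_mul_le_of_rpow_le_s17 {f g : α → ℝ} (hpq : p.HolderConjugate q)
    (hf : 0 ≤ᵐ[μ] f) (hg : 0 ≤ᵐ[μ] g) (hP : Integrable P μ) (hQ : Integrable Q μ)
    (hfP : ∀ᵐ x ∂μ, f x ^ p ≤ P x) (hgQ : ∀ᵐ x ∂μ, g x ^ q ≤ Q x) :
    ∫ x, f x * g x ∂μ ≤ (∫ x, P x ∂μ) ^ (1 / p) * (∫ x, Q x ∂μ) ^ (1 / q) := by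
  have hP₀ : 0 ≤ᵐ[μ] P := by
    filter_upwards [hf, hfP] with x hx hxP using (rpow_nonneg hx p).trans hxP
  have hQ₀ : 0 ≤ᵐ[μ] Q := by
    filter_upwards [hg, hgQ] with x hx hxQ using (rpow_nonneg hx q).trans hxQ
  have hP_root := memLp_rpow_one_div_of_integrable hpq.pos hP hP₀
  have hQ_root := memLp_rpow_one_div_of_integrable hpq.symm.pos hQ hQ₀
  have hfg_nonneg : 0 ≤ᵐ[μ] fun x => f x * g x := by
    filter_upwards [hf, hg] with x using mul_nonneg
  have hfg_le : (fun x => f x * g x) ≤ᵐ[μ] fun x => P x ^ (1 / p) * Q x ^ (1 / q) := by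
    filter_upwards [hf, hg, hP₀, hQ₀, hfP, hgQ] with x hfx hgx hPx hQx hfPx hgQx
    rw [one_div, one_div]
    exact mul_le_mul ((le_rpow_inv_iff_of_pos hfx hPx hpq.pos).2 hfPx)
      ((le_rpow_inv_iff_of_pos hgx hQx hpq.symm.pos).2 hgQx) hgx (rpow_nonneg hPx _)
  have := hpq.ennrealOfReal
  calc ∫ x, f x * g x ∂μ
    _ ≤ ∫ x, P x ^ (1 / p) * Q x ^ (1 / q) ∂μ :=
      integral_mono_of_nonneg hfg_nonneg (hP_root.integrable_mul hQ_root) hfg_le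
    _ ≤ (∫ x, (P x ^ (1 / p)) ^ p ∂μ) ^ (1 / p) * (∫ x, (Q x ^ (1 / q)) ^ q ∂μ) ^ (1 / q) :=
      integral_mul_le_Lp_mul_Lq_of_nonneg hpq
        (hP₀.mono fun _ hx => rpow_nonneg hx _) (hQ₀.mono fun _ hx => rpow_nonneg hx _)
        hP_root hQ_root
    _ = (∫ x, P x ∂μ) ^ (1 / p) * (∫ x, Q x ∂μ) ^ (1 / q) := by
      rw [integral_rpow_one_div_rpow hpq.ne_zero hP₀,
        integral_rpow_one_div_rpow hpq.symm.ne_zero hQ₀]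

end Holder

section LogChord

variable {a b : ℝ}

/-- The chord in the variable `log x`: the function affine in `log x` that takes the value `A` at
`a` and `B` at `b`. It majorizes GA-convex functions with these end values. -/
noncomputable def logChord (a b A B x : ℝ) : ℝ :=
  (log b - log x) / (log b - log a) * A + (log x - log a) / (log b - log a) * B

lemma logChord_eq_sub (a b A B x : ℝ) :
    logChord a b A B x =
      (log b * A - log a * B) / (log b - log a) - (A - B) / (log b - log a) * log x := by
  rw [logChord]
  ring

lemma intervalIntegrable_logChord (a b A B c d : ℝ) :
    IntervalIntegrable (logChord a b A B) volume c d := by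
  simp only [funext (logChord_eq_sub a b A B)]
  exact intervalIntegrable_const.sub (intervalIntegral.intervalIntegrable_log'.const_mul _)

lemma integral_logChord (hab : log a ≠ log b) (A B : ℝ) :
    ∫ x in a..b, logChord a b A B x = A * (L a b - a) + (b - L a b) * B := by
  have hlog : log b - log a ≠ 0 := sub_ne_zero.2 hab.symm
  simp only [logChord_eq_sub]
  rw [intervalIntegral.integral_sub intervalIntegrable_const
    (intervalIntegral.intervalIntegrable_log'.const_mul _), intervalIntegral.integral_const,
    intervalIntegral.integral_const_mul, integral_log, smul_eq_mul, L]
  field_simp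
  ring

lemma GAConvexOn.convexOn_comp_exp {c : ℝ} {h : ℝ → ℝ} (hc : 0 < c) (hh : GAConvexOn 1 1 c h) :
    ConvexOn ℝ (Iic (log c)) fun t => h (exp t) := by
  have exp_mem : ∀ t ∈ Iic (log c), exp t ∈ Icc 0 c := fun t ht =>
    ⟨(exp_pos t).le, (le_log_iff_exp_le hc).1 ht⟩
  refine ⟨convex_Iic _, fun s hs t ht l m hl hm hlm => ?_⟩
  obtain rfl : m = 1 - l := eq_sub_of_add_eq' hlm
  have exp_combo : exp (l * s + (1 - l) * t) = exp s ^ l * exp t ^ (1 - l) := by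
    rw [← exp_mul, ← exp_mul, ← exp_add, mul_comm s, mul_comm t]
  simpa only [smul_eq_mul, exp_combo, one_mul, rpow_one] using
    hh _ (exp_mem s hs) _ (exp_mem t ht) l ⟨hl, sub_nonneg.1 hm⟩

lemma le_logChord_of_convexOn_comp_exp {h : ℝ → ℝ} {x : ℝ} (ha : 0 < a) (hab : a < b)
    (hh : ConvexOn ℝ (Icc (log a) (log b)) fun t => h (exp t)) (hx : x ∈ Icc a b) :
    h x ≤ logChord a b (h a) (h b) x := by
  have hx₀ : 0 < x := ha.trans_le hx.1
  have hlog : 0 < log b - log a := sub_pos.2 (log_lt_log ha hab)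
  have hax : 0 ≤ log x - log a := sub_nonneg.2 (log_le_log ha hx.1)
  have hxb : 0 ≤ log b - log x := sub_nonneg.2 (log_le_log hx₀ hx.2)
  have weights_add : (log b - log x) / (log b - log a) + (log x - log a) / (log b - log a) = 1 := by
    field_simp
    ring
  have log_eq_combo : (log b - log x) / (log b - log a) * log a +
      (log x - log a) / (log b - log a) * log b = log x := by
    field_simp
    ring
  have hle : log a ≤ log b := (sub_pos.1 hlog).le
  simpa only [logChord, smul_eq_mul, log_eq_combo, exp_log ha, exp_log (ha.trans hab),
    exp_log hx₀] using hh.2 (left_mem_Icc.2 hle) (right_mem_Icc.2 hle)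
      (div_nonneg hxb hlog.le) (div_nonneg hax hlog.le) weights_add

end LogChord

/-- The left-hand integral is not a junk value: `f * g` is bounded on `[a, b]` and, by convexity,
continuous on `Ioo a b`. -/
theorem stmt_17_general {f g : ℝ → ℝ} {a b p q : ℝ} (ha : 0 < a) (hab : a < b)
    (hpq : p.HolderConjugate q) (hf : ∀ x ∈ Icc a b, 0 ≤ f x) (hg : ∀ x ∈ Icc a b, 0 ≤ g x)
    (hfconv : ConvexOn ℝ (Icc (log a) (log b)) fun t => f (exp t) ^ p)
    (hgconv : ConvexOn ℝ (Icc (log a) (log b)) fun t => g (exp t) ^ q) :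
    ∫ x in a..b, f x * g x ≤
      (f a ^ p * (L a b - a) + (b - L a b) * f b ^ p) ^ (1 / p) *
        (g a ^ q * (L a b - a) + (b - L a b) * g b ^ q) ^ (1 / q) := by
  have ae_of_Icc {r : ℝ → Prop} (hr : ∀ x ∈ Icc a b, r x) : ∀ᵐ x ∂volume.restrict (Ioc a b), r x :=
    ae_restrict_of_forall_mem measurableSet_Ioc fun x hx => hr x (Ioc_subset_Icc_self hx)
  have hlog : log a ≠ log b := (log_lt_log ha hab).ne
  rw [← integral_logChord hlog, ← integral_logChord hlog]
  simp only [intervalIntegral.integral_of_le hab.le]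
  exact integral_mul_le_of_rpow_le_s17 hpq (ae_of_Icc hf) (ae_of_Icc hg)
    (intervalIntegrable_logChord ..).1 (intervalIntegrable_logChord ..).1
    (ae_of_Icc fun x => le_logChord_of_convexOn_comp_exp (h := fun x => f x ^ p) ha hab hfconv)
    (ae_of_Icc fun x => le_logChord_of_convexOn_comp_exp (h := fun x => g x ^ q) ha hab hgconv)

theorem stmt_17 (f g : ℝ → ℝ) (a b q : ℝ) (ha : 0 < a) (hab : a < b) (hq : 1 < q)
    (hf0 : ∀ x ∈ Ici (0:ℝ), 0 ≤ f x) (hg0 : ∀ x ∈ Ici (0:ℝ), 0 ≤ g x)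
    (hfg : IntervalIntegrable (fun x => f x * g x) volume a b)
    (hfconv : GAConvexOn 1 1 b (fun x => f x ^ q))
    (hgconv : GAConvexOn 1 1 b (fun x => g x ^ (q / (q - 1)))) :
    ∫ x in a..b, f x * g x ≤
      (f a ^ q * (L a b - a) + (b - L a b) * f b ^ q) ^ (1/q) *
        (g a ^ (q / (q - 1)) * (L a b - a) +
          (b - L a b) * g b ^ (q / (q - 1))) ^ (1 - 1/q) := by
  have hb : 0 < b := ha.trans hab
  have hpq : q.HolderConjugate (q / (q - 1)) := .conjExponent hq
  simpa only [one_div, hpq.one_sub_inv] using stmt_17_general ha hab hpq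
    (fun x hx => hf0 x (ha.le.trans hx.1)) (fun x hx => hg0 x (ha.le.trans hx.1))
    ((hfconv.convexOn_comp_exp hb).subset Icc_subset_Iic_self (convex_Icc _ _))
    ((hgconv.convexOn_comp_exp hb).subset Icc_subset_Iic_self (convex_Icc _ _))
end
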